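/- arXiv:1507.04132 — 5 statements merged into one kernel-verified Lean document; each statement's English description precedes it below -/
import Mathlib

section
/- Let u : ℕ → ℂ be a multiplicative function with |u(n)| ≤ 1 for all n, and let P ∈ ℝ[x] be a non-constant polynomial whose leading coefficient is irrational. Then (1/M) Σ_{M ≤ m < 2M} (1/H) | Σ_{m ≤ n < m+H} e^{2πi P(n)} u(n) | → 0 as M → ∞, H → ∞ and H/M → 0; precisely, for every ε > 0 there exist H₀ ∈ ℕ and δ > 0 such that for all integers H ≥ H₀ and M ≥ 1 with H/M ≤ δ, one has (1/M) Σ_{M ≤ m < 2M} (1/H) | Σ_{m ≤ n < m+H} e^{2πi P(n)} u(n) | < ε. -/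
/-!
Multiply each inner sum by a unimodular constant to remove its absolute value. The whole average
becomes one sum of `e(P(n)) u(n) g(n)` over `0 < n ≤ N = 2M + H`, divided by `max M H ≥ N / 3`,
in which the bounded weight `g` depends on `u` but has total variation only `O(N / H)`.
To such a sum Kátai's argument applies: by the Turán–Kubilius inequality a typical `n` has about
`A = ∑ 1/p` prime divisors in a finite set of primes with `A` large, so writing `n = p k` and using
`u(p k) = u(p) u(k)` for `p ∤ k`, Cauchy–Schwarz eliminates `u` and leaves the correlations of
`e(P(p k)) g(p k)` and `e(P(q k)) g(q k)` with `p ≠ q`. The polynomial `P(p x) - P(q x)` again has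
irrational leading coefficient, so Weyl's bound gives cancellation in every window of a fixed
length `L`; on all but `O(N / H)` such windows the weight is nearly constant, and the correlations
are `o(N)` as `H → ∞`, uniformly in `g` and in `N ≥ H`.
-/

open MeasureTheory Filter

section

open Finset
open scoped ComplexConjugate FourierTransform Polynomial

variable {𝕜 : Type*} [RCLike 𝕜]

/-! ### Van der Corput's inequality and Weyl sums -/

lemma norm_sum_mul_sum_sq_le_of_almost_orthogonal {ι κ : Type*} {S : Finset ι} {J : Finset κ}
    {b : ι → 𝕜} {a : κ → ι → 𝕜} {D : κ → ℝ} {δ : ℝ} (hδ : 0 ≤ δ) (hb : ∀ n ∈ S, ‖b n‖ ≤ 1)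
    (hdiag : ∀ j ∈ J, ∑ n ∈ S, ‖a j n‖ ^ 2 ≤ D j)
    (hoff : ∀ j ∈ J, ∀ i ∈ J, j ≠ i → ‖∑ n ∈ S, a j n * conj (a i n)‖ ≤ δ) :
    ‖∑ n ∈ S, b n * ∑ j ∈ J, a j n‖ ^ 2 ≤ #S * (∑ j ∈ J, D j + #J ^ 2 * δ) := by
  classical
  have hpair : ∀ j ∈ J, ∀ i ∈ J,
      ‖∑ n ∈ S, a j n * conj (a i n)‖ ≤ (if j = i then D j else 0) + δ := by
    intro j hj i hi
    split_ifs with hji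
    · subst hji
      refine (norm_sum_le_of_le S fun n _ => ?_).trans ((hdiag j hj).trans (by simpa using hδ))
      rw [norm_mul, RCLike.norm_conj, sq]
    · simpa using hoff j hj i hi hji
  have hexpand : ((∑ n ∈ S, ‖∑ j ∈ J, a j n‖ ^ 2 : ℝ) : 𝕜) =
      ∑ j ∈ J, ∑ i ∈ J, ∑ n ∈ S, a j n * conj (a i n) := by
    push_cast
    simp only [← RCLike.mul_conj, map_sum, sum_mul_sum]
    rw [sum_comm]
    exact sum_congr rfl fun j _ => sum_comm
  have hsq : ∑ n ∈ S, ‖∑ j ∈ J, a j n‖ ^ 2 ≤ ∑ j ∈ J, D j + #J ^ 2 * δ :=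
    calc ∑ n ∈ S, ‖∑ j ∈ J, a j n‖ ^ 2
        = ‖((∑ n ∈ S, ‖∑ j ∈ J, a j n‖ ^ 2 : ℝ) : 𝕜)‖ := by
          rw [RCLike.norm_of_nonneg (sum_nonneg fun _ _ => by positivity)]
      _ ≤ ∑ j ∈ J, ∑ i ∈ J, ((if j = i then D j else 0) + δ) := by
          rw [hexpand]
          exact norm_sum_le_of_le J fun j hj => norm_sum_le_of_le J fun i hi => hpair j hj i hi
      _ = ∑ j ∈ J, D j + #J ^ 2 * δ := by
          simp only [sum_add_distrib, sum_ite_eq, sum_const, nsmul_eq_mul]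
          rw [sum_congr rfl fun j hj => if_pos hj]
          ring
  calc ‖∑ n ∈ S, b n * ∑ j ∈ J, a j n‖ ^ 2
      ≤ (∑ n ∈ S, ‖∑ j ∈ J, a j n‖) ^ 2 := by
        gcongr
        refine norm_sum_le_of_le S fun n hn => ?_
        rw [norm_mul]
        exact mul_le_of_le_one_left (norm_nonneg _) (hb n hn)
    _ ≤ #S * ∑ n ∈ S, ‖∑ j ∈ J, a j n‖ ^ 2 := sq_sum_le_card_mul_sum_sq
    _ ≤ #S * (∑ j ∈ J, D j + #J ^ 2 * δ) := by gcongr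

/-- The averages of `f` over windows of length `L` tend to `0` as `L → ∞`, uniformly in the
position of the window, that is, `f` has mean `0` in the sense of Banach density. -/
def UniformMeanZero {E : Type*} [SeminormedAddCommGroup E] (f : ℕ → E) : Prop :=
  ∀ η > (0 : ℝ), ∀ᶠ L : ℕ in atTop, ∀ a, ‖∑ i ∈ range L, f (a + i)‖ ≤ η * L

lemma UniformMeanZero.comp_add_right {E : Type*} [SeminormedAddCommGroup E] {f : ℕ → E}
    (hf : UniformMeanZero f) (j : ℕ) : UniformMeanZero fun n => f (n + j) := by
  intro η hη
  filter_upwards [hf η hη] with L hL a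
  simpa only [add_right_comm] using hL (a + j)

lemma UniformMeanZero.conj {f : ℕ → 𝕜} (hf : UniformMeanZero f) :
    UniformMeanZero fun n => conj (f n) := by
  intro η hη
  simpa only [← map_sum, RCLike.norm_conj] using hf η hη

lemma uniformMeanZero_geometric (c : 𝕜) {z : 𝕜} (hz : ‖z‖ ≤ 1) (hz1 : z ≠ 1) :
    UniformMeanZero fun n => c * z ^ n := by
  intro η hη
  have hpos : 0 < ‖z - 1‖ := norm_pos_iff.2 (sub_ne_zero.2 hz1)
  filter_upwards [eventually_ge_atTop ⌈2 * ‖c‖ / (‖z - 1‖ * η)⌉₊] with L hL a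
  have hpow : ∀ n, ‖z ^ n‖ ≤ 1 := fun n => by
    rw [norm_pow]
    exact pow_le_one₀ (norm_nonneg z) hz
  have hgeom : (∑ i ∈ range L, c * z ^ (a + i)) * (z - 1) = c * z ^ a * (z ^ L - 1) := by
    simp only [pow_add, ← mul_assoc, ← mul_sum]
    rw [mul_assoc, geom_sum_mul]
  have hL' : 2 * ‖c‖ ≤ L * (‖z - 1‖ * η) := (div_le_iff₀ (by positivity)).1 (Nat.ceil_le.1 hL)
  refine le_of_mul_le_mul_right ?_ hpos
  calc ‖∑ i ∈ range L, c * z ^ (a + i)‖ * ‖z - 1‖ = ‖c‖ * ‖z ^ a‖ * ‖z ^ L - 1‖ := by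
        rw [← norm_mul, hgeom, norm_mul, norm_mul]
    _ ≤ ‖c‖ * 1 * (1 + 1) := by
        gcongr
        · exact hpow a
        · exact (norm_sub_le _ _).trans (add_le_add (hpow L) norm_one.le)
    _ ≤ η * L * ‖z - 1‖ := by linarith

lemma norm_sum_range_sub_sum_shift_le {z : ℕ → 𝕜} (hz : ∀ n, ‖z n‖ ≤ 1) (L j : ℕ) :
    ‖∑ n ∈ range L, z n - ∑ n ∈ range L, z (n + j)‖ ≤ 2 * j := by
  have hswap : ∑ n ∈ range L, z n - ∑ n ∈ range L, z (n + j) =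
      ∑ n ∈ range j, z n - ∑ n ∈ range j, z (L + n) := by
    have hjL := sum_range_add z j L
    have hLj := sum_range_add z L j
    rw [add_comm j L] at hjL
    simp only [add_comm _ j]
    linear_combination hjL - hLj
  have hj : ∀ a, ‖∑ n ∈ range j, z (a + n)‖ ≤ j := fun a => by
    simpa using norm_sum_le_of_le (range j) fun n _ => hz (a + n)
  rw [hswap, two_mul]
  exact (norm_sub_le _ _).trans (add_le_add (by simpa using hj 0) (hj L))

lemma van_der_corput_inequality {z : ℕ → 𝕜} (hz : ∀ n, ‖z n‖ ≤ 1) {K L : ℕ}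
    (hcorr : ∀ j ∈ range K, ∀ i ∈ range K, j ≠ i →
      K * ‖∑ n ∈ range L, z (n + j) * conj (z (n + i))‖ ≤ L) :
    K * ‖∑ n ∈ range L, z n‖ ≤ 2 * K ^ 2 + √(2 * K) * L := by
  rcases K.eq_zero_or_pos with rfl | hK
  · simp
  set T := ∑ n ∈ range L, 1 * ∑ j ∈ range K, z (n + j) with hT
  have hT_sq : ‖T‖ ^ 2 ≤ (√(2 * K) * L) ^ 2 :=
    calc ‖T‖ ^ 2 ≤ #(range L) * (∑ _j ∈ range K, (L : ℝ) + #(range K) ^ 2 * (L / K)) := by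
          refine norm_sum_mul_sum_sq_le_of_almost_orthogonal (by positivity) (by simp)
            (fun j _ => ?_) fun j hj i hi hji => ?_
          · simpa using sum_le_card_nsmul (range L) (fun n => ‖z (n + j)‖ ^ 2) 1
              fun n _ => pow_le_one₀ (norm_nonneg _) (hz _)
          · rw [le_div_iff₀' (by positivity)]
            exact hcorr j hj i hi hji
      _ = (√(2 * K) * L) ^ 2 := by
          rw [mul_pow, Real.sq_sqrt (by positivity), card_range, card_range, sum_const, card_range,
            nsmul_eq_mul]
          field_simp
          ring
  have hshift : ‖K * ∑ n ∈ range L, z n - T‖ ≤ 2 * K ^ 2 := by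
    have hdiff : K * ∑ n ∈ range L, z n - T =
        ∑ j ∈ range K, (∑ n ∈ range L, z n - ∑ n ∈ range L, z (n + j)) := by
      rw [sum_sub_distrib, sum_const, card_range, nsmul_eq_mul, hT, sum_comm]
      simp only [one_mul]
    have hle : ∀ j ∈ range K, ‖∑ n ∈ range L, z n - ∑ n ∈ range L, z (n + j)‖ ≤ 2 * K :=
      fun j hj => (norm_sum_range_sub_sum_shift_le hz L j).trans <| by
        gcongr
        exact (mem_range.1 hj).le
    rw [hdiff]
    refine (norm_sum_le_of_le _ hle).trans_eq ?_
    rw [sum_const, card_range, nsmul_eq_mul]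
    ring
  calc K * ‖∑ n ∈ range L, z n‖ = ‖(K * ∑ n ∈ range L, z n - T) + T‖ := by simp
    _ ≤ 2 * K ^ 2 + √(2 * K) * L :=
        (norm_add_le _ _).trans (add_le_add hshift (abs_le_of_sq_le_sq' hT_sq (by positivity)).2)

theorem uniformMeanZero_of_correlations {z : ℕ → 𝕜} (hz : ∀ n, ‖z n‖ ≤ 1)
    (hcorr : ∀ h > 0, UniformMeanZero fun n => z (n + h) * conj (z n)) : UniformMeanZero z := by
  have hlt : ∀ i j, i < j → UniformMeanZero fun n => z (n + j) * conj (z (n + i)) := by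
    intro i j hij
    obtain ⟨h, rfl⟩ := Nat.exists_eq_add_of_lt hij
    simpa only [add_assoc] using (hcorr (h + 1) h.succ_pos).comp_add_right i
  have hpair : ∀ j i, j ≠ i → UniformMeanZero fun n => z (n + j) * conj (z (n + i)) := by
    intro j i hji
    rcases hji.lt_or_gt with hj | hj
    · simpa only [map_mul, RCLike.conj_conj, mul_comm] using (hlt j i hj).conj
    · exact hlt i j hj
  intro η hη
  obtain ⟨K, hK⟩ := exists_nat_gt (8 / η ^ 2)
  have hK0 : (0 : ℝ) < K := lt_trans (by positivity) hK
  have hcorrK : ∀ᶠ L : ℕ in atTop, ∀ j ∈ range K, ∀ i ∈ range K, j ≠ i →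
      ∀ a, ‖∑ n ∈ range L, z (a + n + j) * conj (z (a + n + i))‖ ≤ 1 / K * L := by
    simp only [eventually_all_finset, eventually_all]
    exact fun j _ i _ hji => hpair j i hji _ (by positivity)
  filter_upwards [hcorrK, eventually_ge_atTop ⌈4 * K / η⌉₊] with L hL hLK a
  have hvdc := van_der_corput_inequality (z := fun n => z (a + n)) (K := K) (L := L)
    (fun n => hz _) fun j hj i hi hji => by
      have := hL j hj i hi hji a
      rw [div_mul_eq_mul_div, one_mul, le_div_iff₀' hK0] at this
      simpa only [add_assoc] using this
  have hsqrt : √(2 * K) ≤ η / 2 * K := by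
    rw [div_lt_iff₀ (by positivity)] at hK
    rw [Real.sqrt_le_left (by positivity)]
    nlinarith
  have hLK' : 4 * K ≤ L * η := (div_le_iff₀ hη).1 (Nat.ceil_le.1 hLK)
  refine le_of_mul_le_mul_left ?_ hK0
  calc K * ‖∑ n ∈ range L, z (a + n)‖ ≤ 2 * K ^ 2 + √(2 * K) * L := hvdc
    _ ≤ 2 * K ^ 2 + η / 2 * K * L := by gcongr
    _ ≤ K * (η * L) := by nlinarith

lemma coeff_taylor_sub_self {R : Type*} [CommRing R] {P : R[X]} {n : ℕ} (hP : P.natDegree ≤ n + 1)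
    (r : R) : (Polynomial.taylor r P - P).coeff n = (n + 1) * r * P.coeff (n + 1) := by
  have h : (Polynomial.hasseDeriv n P).natDegree < 2 := by
    have := Polynomial.natDegree_hasseDeriv_le P n
    omega
  rw [Polynomial.coeff_sub, Polynomial.taylor_coeff, Polynomial.eval_eq_sum_range' h]
  simp only [sum_range_succ, range_zero, sum_empty, Polynomial.hasseDeriv_coeff, add_comm 1 n,
    Nat.choose_succ_self_right]
  push_cast
  simp
  ring

lemma coe_fourierChar_sub (x y : ℝ) : (𝐞 (x - y) : ℂ) = 𝐞 x * conj (𝐞 y : ℂ) := by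
  rw [AddChar.map_sub_eq_div, div_eq_mul_inv, Circle.coe_mul, Circle.coe_inv_eq_conj]

lemma fourierChar_ne_one_of_irrational {x : ℝ} (hx : Irrational x) : (𝐞 x : ℂ) ≠ 1 := by
  rw [Real.fourierChar_apply, Ne, Complex.exp_eq_one_iff]
  rintro ⟨n, hn⟩
  refine hx.ne_int n (Complex.ofReal_injective (mul_right_cancel₀ Complex.two_pi_I_ne_zero ?_))
  rw [Complex.ofReal_intCast, ← hn]
  push_cast
  ring

theorem uniformMeanZero_fourierChar_eval {d : ℕ} {P : ℝ[X]} (hP : P.natDegree ≤ d + 1)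
    (hirr : Irrational (P.coeff (d + 1))) :
    UniformMeanZero fun n : ℕ => (𝐞 (P.eval (n : ℝ)) : ℂ) := by
  induction d generalizing P with
  | zero =>
    obtain ⟨α, β, rfl⟩ := Polynomial.exists_eq_X_add_C_of_natDegree_le_one hP
    have hα : Irrational α := by simpa using hirr
    convert uniformMeanZero_geometric (𝐞 β : ℂ) (z := 𝐞 α) (Circle.norm_coe _).le
      (fourierChar_ne_one_of_irrational hα) using 2 with n
    rw [← Circle.coe_pow, ← AddChar.map_nsmul_eq_pow, ← Circle.coe_mul,
      ← AddChar.map_add_eq_mul]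
    congr 2
    simp
    ring
  | succ d ih =>
    refine uniformMeanZero_of_correlations (fun _ => (Circle.norm_coe _).le) fun h hh => ?_
    have hcoeff {n : ℕ} (hn : d + 1 ≤ n) :=
      coeff_taylor_sub_self (hP.trans (Nat.add_le_add_right hn 1)) (h : ℝ)
    convert ih (P := Polynomial.taylor (h : ℝ) P - P) ?_ ?_ using 2 with n
    · rw [Polynomial.eval_sub, Polynomial.taylor_eval, coe_fourierChar_sub, Nat.cast_add]
    · rw [Polynomial.natDegree_le_iff_coeff_eq_zero]
      intro n hn
      rw [hcoeff hn.le, Polynomial.coeff_eq_zero_of_natDegree_lt (by omega), mul_zero]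
    · rw [hcoeff le_rfl]
      have := hirr.natCast_mul (m := (d + 2) * h) (by positivity)
      convert this using 2
      push_cast
      ring

/-! ### Weights of bounded variation -/

/-- `g` has total variation at most `V`. The total variation is witnessed by a control function
`W`, which may be thought of as the variation of `g` on `[0, n]`; sums, products and monotone
reparametrizations of `g` then simply act on `W`. -/
def VariationLE (g : ℕ → 𝕜) (V : ℝ) : Prop :=
  ∃ W : ℕ → ℝ, (∀ n, W n ∈ Set.Icc 0 V) ∧ ∀ m n, m ≤ n → ‖g n - g m‖ ≤ W n - W m

namespace VariationLE

variable {f g : ℕ → 𝕜} {V V' : ℝ}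

lemma mono (hg : VariationLE g V) (hV : V ≤ V') : VariationLE g V' := by
  obtain ⟨W, hW, hgW⟩ := hg
  exact ⟨W, fun n => ⟨(hW n).1, (hW n).2.trans hV⟩, hgW⟩

lemma comp_monotone (hg : VariationLE g V) {r : ℕ → ℕ} (hr : Monotone r) :
    VariationLE (fun n => g (r n)) V := by
  obtain ⟨W, hW, hgW⟩ := hg
  exact ⟨fun n => W (r n), fun n => hW (r n), fun m n hmn => hgW _ _ (hr hmn)⟩

lemma const_mul (hg : VariationLE g V) (c : 𝕜) : VariationLE (fun n => c * g n) (‖c‖ * V) := by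
  obtain ⟨W, hW, hgW⟩ := hg
  refine ⟨fun n => ‖c‖ * W n, fun n => ⟨mul_nonneg (norm_nonneg c) (hW n).1,
    mul_le_mul_of_nonneg_left (hW n).2 (norm_nonneg c)⟩, fun m n hmn => ?_⟩
  rw [← mul_sub, ← mul_sub, norm_mul]
  exact mul_le_mul_of_nonneg_left (hgW m n hmn) (norm_nonneg c)

lemma sum {ι : Type*} {s : Finset ι} {g : ι → ℕ → 𝕜} {V : ι → ℝ}
    (hg : ∀ i ∈ s, VariationLE (g i) (V i)) :
    VariationLE (fun n => ∑ i ∈ s, g i n) (∑ i ∈ s, V i) := by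
  choose! W hW hgW using hg
  refine ⟨fun n => ∑ i ∈ s, W i n, fun n => ⟨sum_nonneg fun i hi => (hW i hi n).1,
    sum_le_sum fun i hi => (hW i hi n).2⟩, fun m n hmn => ?_⟩
  rw [← sum_sub_distrib, ← sum_sub_distrib]
  exact norm_sum_le_of_le s fun i hi => hgW i hi m n hmn

lemma mul (hf : VariationLE f V) (hg : VariationLE g V') (hf1 : ∀ n, ‖f n‖ ≤ 1)
    (hg1 : ∀ n, ‖g n‖ ≤ 1) : VariationLE (fun n => f n * g n) (V + V') := by
  obtain ⟨W, hW, hfW⟩ := hf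
  obtain ⟨W', hW', hgW'⟩ := hg
  refine ⟨fun n => W n + W' n, fun n => ⟨add_nonneg (hW n).1 (hW' n).1,
    add_le_add (hW n).2 (hW' n).2⟩, fun m n hmn => ?_⟩
  calc ‖f n * g n - f m * g m‖ = ‖(f n - f m) * g n + f m * (g n - g m)‖ := by ring_nf
    _ ≤ ‖f n - f m‖ * ‖g n‖ + ‖f m‖ * ‖g n - g m‖ := by
        simpa only [norm_mul] using norm_add_le ((f n - f m) * g n) (f m * (g n - g m))
    _ ≤ (W n - W m) + (W' n - W' m) := add_le_add
        ((mul_le_of_le_one_right (norm_nonneg _) (hg1 n)).trans (hfW m n hmn))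
        ((mul_le_of_le_one_left (norm_nonneg _) (hf1 m)).trans (hgW' m n hmn))
    _ = W n + W' n - (W m + W' m) := by ring

end VariationLE

lemma VariationLE.conj {g : ℕ → 𝕜} {V : ℝ} (hg : VariationLE g V) :
    VariationLE (fun n => conj (g n)) V := by
  obtain ⟨W, hW, hgW⟩ := hg
  exact ⟨W, hW, fun m n hmn => by simpa only [← map_sub, RCLike.norm_conj] using hgW m n hmn⟩

lemma variationLE_ite_mem_Ico (a b : ℕ) :
    VariationLE (fun n => if n ∈ Ico a b then (1 : 𝕜) else 0) 2 := by
  refine ⟨fun n => (if a ≤ n then 1 else 0) + (if b ≤ n then 1 else 0), fun n => ?_,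
    fun m n hmn => ?_⟩
  · dsimp only
    constructor <;> split_ifs <;> norm_num
  · simp only [mem_Ico]
    split_ifs <;> first | omega | norm_num

lemma norm_sum_range_mul_le_of_control {f g : ℕ → 𝕜} {W : ℕ → ℝ} (hf : ∀ n, ‖f n‖ ≤ 1)
    (hW : ∀ m n, m ≤ n → ‖g n - g m‖ ≤ W n - W m) (a L : ℕ) :
    ‖∑ i ∈ range L, f (a + i) * g (a + i)‖ ≤
      ‖∑ i ∈ range L, f (a + i)‖ * ‖g a‖ + L * (W (a + L) - W a) := by
  have hsplit : ∑ i ∈ range L, f (a + i) * g (a + i) =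
      (∑ i ∈ range L, f (a + i)) * g a + ∑ i ∈ range L, f (a + i) * (g (a + i) - g a) := by
    rw [sum_mul, ← sum_add_distrib]
    exact sum_congr rfl fun i _ => by ring
  have hterm : ∀ i ∈ range L, ‖f (a + i) * (g (a + i) - g a)‖ ≤ W (a + L) - W a := by
    intro i hi
    have hmono := (norm_nonneg _).trans
      (hW (a + i) (a + L) (Nat.add_le_add_left (mem_range.1 hi).le a))
    calc ‖f (a + i) * (g (a + i) - g a)‖ ≤ ‖g (a + i) - g a‖ := by
          rw [norm_mul]
          exact mul_le_of_le_one_left (norm_nonneg _) (hf _)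
      _ ≤ W (a + i) - W a := hW a (a + i) (Nat.le_add_right a i)
      _ ≤ W (a + L) - W a := by linarith
  rw [hsplit, ← norm_mul]
  refine (norm_add_le _ _).trans (add_le_add_right ?_ _)
  refine (norm_sum_le_of_le _ hterm).trans_eq ?_
  rw [sum_const, card_range, nsmul_eq_mul]

lemma norm_sum_range_mul_le_of_block {f g : ℕ → 𝕜} {W : ℕ → ℝ} {L : ℕ} {η : ℝ} (hL : 0 < L)
    (hf : ∀ n, ‖f n‖ ≤ 1) (hblock : ∀ a, ‖∑ i ∈ range L, f (a + i)‖ ≤ η * L)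
    (hg : ∀ n, ‖g n‖ ≤ 1) (hW : ∀ m n, m ≤ n → ‖g n - g m‖ ≤ W n - W m) (a N : ℕ) :
    ‖∑ i ∈ range N, f (a + i) * g (a + i)‖ ≤ η * N + L * (W (a + N) - W a) + L := by
  induction N using Nat.strong_induction_on generalizing a with
  | _ N ih =>
    rcases lt_or_ge N L with hNL | hNL
    · have htriv : ‖∑ i ∈ range N, f (a + i) * g (a + i)‖ ≤ N := by
        simpa using norm_sum_le_of_le (range N) fun i _ =>
          (norm_mul_le _ _).trans (mul_le_one₀ (hf (a + i)) (norm_nonneg _) (hg (a + i)))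
      have hη : 0 ≤ η := nonneg_of_mul_nonneg_left ((norm_nonneg _).trans (hblock 0))
        (Nat.cast_pos.2 hL)
      have hmono := (norm_nonneg _).trans (hW a (a + N) (Nat.le_add_right a N))
      have hNL' : (N : ℝ) ≤ L := Nat.cast_le.2 hNL.le
      have : 0 ≤ η * N + L * (W (a + N) - W a) := by positivity
      linarith
    · obtain ⟨k, rfl⟩ := Nat.exists_eq_add_of_le hNL
      have hfirst := norm_sum_range_mul_le_of_control hf hW a L
      have hrest := ih k (by omega) (a + L)
      have hηL := (mul_le_of_le_one_right (norm_nonneg _) (hg a)).trans (hblock a)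
      rw [sum_range_add]
      simp only [← add_assoc]
      refine (norm_add_le _ _).trans ?_
      push_cast
      linarith

theorem UniformMeanZero.exists_norm_sum_mul_le {f : ℕ → 𝕜} (hf : UniformMeanZero f)
    (hf1 : ∀ n, ‖f n‖ ≤ 1) {η : ℝ} (hη : 0 < η) :
    ∃ L : ℕ, ∀ (g : ℕ → 𝕜) (V : ℝ), (∀ n, ‖g n‖ ≤ 1) → VariationLE g V →
      ∀ a N : ℕ, ‖∑ i ∈ range N, f (a + i) * g (a + i)‖ ≤ η * N + L * (V + 1) := by
  obtain ⟨L, hblock, hL⟩ := ((hf η hη).and (eventually_gt_atTop 0)).exists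
  refine ⟨L, fun g V hg hgV a N => ?_⟩
  obtain ⟨W, hW, hgW⟩ := hgV
  have hrange : W (a + N) - W a ≤ V := by linarith [(hW (a + N)).2, (hW a).1]
  calc ‖∑ i ∈ range N, f (a + i) * g (a + i)‖ ≤ η * N + L * (W (a + N) - W a) + L :=
        norm_sum_range_mul_le_of_block hL hf1 hblock hg hgW a N
    _ ≤ η * N + L * V + L := by gcongr
    _ = η * N + L * (V + 1) := by ring

/-! ### The Turán–Kubilius inequality -/

lemma sum_Ioc_card_filter_dvd (s : Finset ℕ) (N : ℕ) :
    ∑ n ∈ Ioc 0 N, #{p ∈ s | p ∣ n} = ∑ p ∈ s, N / p := by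
  simp only [card_filter]
  rw [sum_comm]
  exact sum_congr rfl fun p _ => by rw [← card_filter, Nat.Ioc_filter_dvd_card_eq_div]

lemma sum_Ioc_card_filter_dvd_sq (s : Finset ℕ) (N : ℕ) :
    ∑ n ∈ Ioc 0 N, #{p ∈ s | p ∣ n} ^ 2 = ∑ p ∈ s, ∑ q ∈ s, N / p.lcm q := by
  have hsq : ∀ n, #{p ∈ s | p ∣ n} ^ 2 = ∑ p ∈ s, ∑ q ∈ s, if p.lcm q ∣ n then 1 else 0 := by
    intro n
    simp only [card_filter, sq, sum_mul_sum, ← ite_and, mul_ite, mul_one, mul_zero,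
      Nat.lcm_dvd_iff, and_comm]
  simp only [hsq]
  rw [sum_comm]
  refine sum_congr rfl fun p _ => ?_
  rw [sum_comm]
  exact sum_congr rfl fun q _ => by rw [← card_filter, Nat.Ioc_filter_dvd_card_eq_div]

theorem turan_kubilius_inequality {s : Finset ℕ} (hs : (s : Set ℕ).Pairwise Nat.Coprime) (N : ℕ) :
    ∑ n ∈ Ioc 0 N, ((#{p ∈ s | p ∣ n} : ℝ) - ∑ p ∈ s, (p : ℝ)⁻¹) ^ 2 ≤
      (N + 2 * #s) * ∑ p ∈ s, (p : ℝ)⁻¹ := by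
  set A := ∑ p ∈ s, (p : ℝ)⁻¹ with hA
  have hA0 : 0 ≤ A := sum_nonneg fun _ _ => by positivity
  have hfirst : N * A - #s ≤ ∑ n ∈ Ioc 0 N, (#{p ∈ s | p ∣ n} : ℝ) := by
    rw [← Nat.cast_sum, sum_Ioc_card_filter_dvd, hA, mul_sum, card_eq_sum_ones]
    push_cast
    rw [← sum_sub_distrib]
    refine sum_le_sum fun p _ => ?_
    rw [← Nat.floor_div_eq_div (K := ℝ), ← div_eq_mul_inv]
    exact (Nat.sub_one_lt_floor _).le
  have hpair : ∀ p ∈ s, ∀ q ∈ s, ((N / p.lcm q : ℕ) : ℝ) ≤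
      N * ((p : ℝ)⁻¹ * (q : ℝ)⁻¹) + if p = q then N * (p : ℝ)⁻¹ else 0 := by
    intro p hp q hq
    refine Nat.cast_div_le.trans ?_
    split_ifs with hpq
    · rw [hpq, Nat.lcm_self, div_eq_mul_inv]
      exact le_add_of_nonneg_left (by positivity)
    · rw [(hs hp hq hpq).lcm_eq_mul, Nat.cast_mul, div_eq_mul_inv, mul_inv, add_zero]
  have hsecond : ∑ n ∈ Ioc 0 N, (#{p ∈ s | p ∣ n} : ℝ) ^ 2 ≤ N * A ^ 2 + N * A := by
    have hsq := congrArg (Nat.cast (R := ℝ)) (sum_Ioc_card_filter_dvd_sq s N)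
    push_cast at hsq
    rw [hsq]
    refine (sum_le_sum fun p hp => sum_le_sum (hpair p hp)).trans_eq ?_
    simp only [sum_add_distrib, sum_ite_eq]
    rw [sum_congr rfl (fun p hp => if_pos hp), sq, hA, sum_mul_sum]
    simp only [mul_sum]
  have hexpand : ∑ n ∈ Ioc 0 N, ((#{p ∈ s | p ∣ n} : ℝ) - A) ^ 2 =
      ∑ n ∈ Ioc 0 N, (#{p ∈ s | p ∣ n} : ℝ) ^ 2 -
        2 * A * ∑ n ∈ Ioc 0 N, (#{p ∈ s | p ∣ n} : ℝ) + N * A ^ 2 := by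
    simp only [sub_sq, sum_add_distrib, sum_sub_distrib, ← sum_mul, ← mul_sum, sum_const,
      Nat.card_Ioc, nsmul_eq_mul, tsub_zero]
    ring
  rw [hexpand]
  linarith [mul_le_mul_of_nonneg_left hfirst hA0]

/-! ### Kátai's bilinear inequality -/

section Katai

variable {N : ℕ} {F u : ℕ → 𝕜}

lemma sum_Ioc_filter_dvd {M : Type*} [AddCommMonoid M] {f : ℕ → M} (hf : ∀ n, N < n → f n = 0)
    {d : ℕ} (hd : 0 < d) : ∑ n ∈ Ioc 0 N with d ∣ n, f n = ∑ k ∈ Ioc 0 N, f (d * k) := by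
  rw [← sum_image (s := Ioc 0 N) (g := fun k => d * k) (f := f)
    fun a _ b _ h => Nat.eq_of_mul_eq_mul_left hd h]
  refine sum_subset (fun n hn => ?_) fun n hn hn' => hf n ?_
  · obtain ⟨hn1, k, rfl⟩ := mem_filter.1 hn
    rw [mem_Ioc] at hn1
    exact mem_image_of_mem _ (mem_Ioc.2 ⟨Nat.pos_of_mul_pos_left hn1.1,
      (Nat.le_mul_of_pos_left k hd).trans hn1.2⟩)
  · obtain ⟨k, hk, rfl⟩ := mem_image.1 hn
    by_contra! h
    exact hn' (mem_filter.2 ⟨mem_Ioc.2 ⟨Nat.mul_pos hd (mem_Ioc.1 hk).1, h⟩, dvd_mul_right _ _⟩)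

lemma sum_norm_dilate_le (hF : ∀ n, ‖F n‖ ≤ 1) (hF0 : ∀ n, N < n → F n = 0) {d : ℕ} (hd : 0 < d) :
    ∑ k ∈ Ioc 0 N, ‖F (d * k)‖ ≤ N * (d : ℝ)⁻¹ :=
  calc ∑ k ∈ Ioc 0 N, ‖F (d * k)‖ = ∑ n ∈ Ioc 0 N with d ∣ n, ‖F n‖ :=
        (sum_Ioc_filter_dvd (f := fun n => ‖F n‖) (fun n hn => by simp [hF0 n hn]) hd).symm
    _ ≤ (N / d : ℕ) := by
        rw [← Nat.Ioc_filter_dvd_card_eq_div, ← nsmul_one]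
        exact sum_le_card_nsmul _ _ _ fun n _ => hF n
    _ ≤ N * (d : ℝ)⁻¹ := Nat.cast_div_le.trans_eq (div_eq_mul_inv _ _)

lemma sum_mul_card_filter_dvd {f : ℕ → 𝕜} (hf : ∀ n, N < n → f n = 0) {s : Finset ℕ}
    (hs : ∀ p ∈ s, 0 < p) :
    ∑ n ∈ Ioc 0 N, f n * #{p ∈ s | p ∣ n} = ∑ p ∈ s, ∑ k ∈ Ioc 0 N, f (p * k) := by
  have hcard : ∀ n, f n * #{p ∈ s | p ∣ n} = ∑ p ∈ s, if p ∣ n then f n else 0 := fun n => by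
    rw [← sum_filter, sum_const, nsmul_eq_mul, mul_comm]
  simp only [hcard]
  rw [sum_comm]
  exact sum_congr rfl fun p hp => by rw [← sum_filter, sum_Ioc_filter_dvd hf (hs p hp)]

lemma norm_sum_mul_sub_card_filter_dvd_le {f : ℕ → 𝕜} (hf : ∀ n, ‖f n‖ ≤ 1) {s : Finset ℕ}
    (hs : (s : Set ℕ).Pairwise Nat.Coprime) (hN : 2 * #s ≤ N) :
    ‖∑ n ∈ Ioc 0 N, f n * ((∑ p ∈ s, (p : ℝ)⁻¹ - #{p ∈ s | p ∣ n} : ℝ) : 𝕜)‖ ≤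
      N * √(2 * ∑ p ∈ s, (p : ℝ)⁻¹) := by
  set A := ∑ p ∈ s, (p : ℝ)⁻¹
  have hN' : (2 * #s : ℝ) ≤ N := by exact_mod_cast hN
  have hsq : (∑ n ∈ Ioc 0 N, |(#{p ∈ s | p ∣ n} : ℝ) - A|) ^ 2 ≤ (N * √(2 * A)) ^ 2 :=
    calc _ ≤ #(Ioc 0 N) * ∑ n ∈ Ioc 0 N, |(#{p ∈ s | p ∣ n} : ℝ) - A| ^ 2 :=
          sq_sum_le_card_mul_sum_sq
      _ ≤ N * ((N + 2 * #s) * A) := by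
          simp only [sq_abs, Nat.card_Ioc, tsub_zero]
          gcongr
          exact turan_kubilius_inequality hs N
      _ ≤ N * ((N + N) * A) := by gcongr
      _ = (N * √(2 * A)) ^ 2 := by
          rw [mul_pow, Real.sq_sqrt (by positivity)]
          ring
  refine (norm_sum_le_of_le _ fun n _ => ?_).trans (abs_le_of_sq_le_sq' hsq (by positivity)).2
  rw [norm_mul, RCLike.norm_ofReal, abs_sub_comm]
  exact mul_le_of_le_one_left (abs_nonneg _) (hf n)

lemma norm_sum_mul_prime_mul_sub_le (hu_mult : ∀ m n : ℕ, Nat.Coprime m n → u (m * n) = u m * u n)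
    (hu_bd : ∀ n, ‖u n‖ ≤ 1) (hF : ∀ n, ‖F n‖ ≤ 1) (hF0 : ∀ n, N < n → F n = 0) {p : ℕ}
    (hp : p.Prime) :
    ‖∑ k ∈ Ioc 0 N, F (p * k) * (u (p * k) - u p * u k)‖ ≤ 2 * N * ((p : ℝ) ^ 2)⁻¹ := by
  have hdvd : ∀ k ∈ Ioc 0 N, ‖F (p * k) * (u (p * k) - u p * u k)‖ ≤
      if p ∣ k then 2 * ‖F (p * k)‖ else 0 := by
    intro k _
    split_ifs with hpk
    · have : ‖u (p * k) - u p * u k‖ ≤ 1 + 1 * 1 := by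
        refine (norm_sub_le _ _).trans (add_le_add (hu_bd _) ?_)
        rw [norm_mul]
        gcongr <;> exact hu_bd _
      rw [norm_mul, mul_comm]
      gcongr
      linarith
    · simp [hu_mult p k (hp.coprime_iff_not_dvd.2 hpk)]
  have hF0' : ∀ n, N < n → 2 * ‖F (p * n)‖ = 0 := fun n hn => by
    simp [hF0 (p * n) (hn.trans_le (Nat.le_mul_of_pos_left n hp.pos))]
  calc _ ≤ ∑ k ∈ Ioc 0 N with p ∣ k, 2 * ‖F (p * k)‖ := by
        rw [sum_filter]
        exact norm_sum_le_of_le _ hdvd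
    _ = 2 * ∑ k ∈ Ioc 0 N, ‖F (p ^ 2 * k)‖ := by
        rw [sum_Ioc_filter_dvd hF0' hp.pos, mul_sum]
        simp only [sq, mul_assoc]
    _ ≤ 2 * (N * ((p ^ 2 : ℕ) : ℝ)⁻¹) := by
        gcongr
        exact sum_norm_dilate_le hF hF0 (pow_pos hp.pos 2)
    _ = 2 * N * ((p : ℝ) ^ 2)⁻¹ := by
        push_cast
        ring

lemma sum_inv_sq_le_two (s : Finset ℕ) : ∑ p ∈ s, ((p : ℝ) ^ 2)⁻¹ ≤ 2 := by
  have hzeta : ∑ p ∈ s, ((p : ℝ) ^ 2)⁻¹ ≤ Real.pi ^ 2 / 6 := by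
    simpa only [one_div] using sum_le_hasSum s (fun _ _ => by positivity) hasSum_zeta_two
  nlinarith [Real.pi_lt_d2, Real.pi_pos]

lemma norm_sum_mul_sum_dilates_le (hu_bd : ∀ n, ‖u n‖ ≤ 1) (hF : ∀ n, ‖F n‖ ≤ 1)
    (hF0 : ∀ n, N < n → F n = 0) {s : Finset ℕ} (hs : ∀ p ∈ s, 0 < p)
    (hcorr : ∀ p ∈ s, ∀ q ∈ s, p ≠ q →
      #s ^ 2 * ‖∑ k ∈ Ioc 0 N, F (p * k) * conj (F (q * k))‖ ≤ N) :
    ‖∑ k ∈ Ioc 0 N, u k * ∑ p ∈ s, F (p * k) * u p‖ ≤ N * √(∑ p ∈ s, (p : ℝ)⁻¹ + 1) := by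
  have hdiag : ∀ p ∈ s, ∑ k ∈ Ioc 0 N, ‖F (p * k) * u p‖ ^ 2 ≤ N * (p : ℝ)⁻¹ := by
    refine fun p hp => (sum_le_sum fun k _ => ?_).trans (sum_norm_dilate_le hF hF0 (hs p hp))
    have hle : ‖F (p * k) * u p‖ ≤ ‖F (p * k)‖ := by
      rw [norm_mul]
      exact mul_le_of_le_one_right (norm_nonneg _) (hu_bd p)
    exact (pow_le_of_le_one (norm_nonneg _) (hle.trans (hF _)) two_ne_zero).trans hle
  have hoff : ∀ p ∈ s, ∀ q ∈ s, p ≠ q →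
      ‖∑ k ∈ Ioc 0 N, F (p * k) * u p * conj (F (q * k) * u q)‖ ≤ N / #s ^ 2 := by
    intro p hp q hq hpq
    have hcard : 0 < #s := card_pos.2 ⟨p, hp⟩
    have hfactor : ∑ k ∈ Ioc 0 N, F (p * k) * u p * conj (F (q * k) * u q) =
        u p * conj (u q) * ∑ k ∈ Ioc 0 N, F (p * k) * conj (F (q * k)) := by
      rw [mul_sum]
      exact sum_congr rfl fun k _ => by rw [map_mul]; ring
    have hupq : ‖u p * conj (u q)‖ ≤ 1 := by
      rw [norm_mul, RCLike.norm_conj]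
      exact mul_le_one₀ (hu_bd p) (norm_nonneg _) (hu_bd q)
    rw [hfactor, norm_mul, le_div_iff₀' (by positivity)]
    refine le_trans ?_ (hcorr p hp q hq hpq)
    gcongr
    exact mul_le_of_le_one_left (norm_nonneg _) hupq
  have hsq : ‖∑ k ∈ Ioc 0 N, u k * ∑ p ∈ s, F (p * k) * u p‖ ^ 2 ≤
      (N * √(∑ p ∈ s, (p : ℝ)⁻¹ + 1)) ^ 2 :=
    calc _ ≤ #(Ioc 0 N) * (∑ p ∈ s, N * (p : ℝ)⁻¹ + #s ^ 2 * (N / #s ^ 2 : ℝ)) :=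
          norm_sum_mul_sum_sq_le_of_almost_orthogonal (by positivity) (fun k _ => hu_bd k)
            hdiag hoff
      _ ≤ N * (N * ∑ p ∈ s, (p : ℝ)⁻¹ + N) := by
          rw [Nat.card_Ioc, tsub_zero, mul_sum]
          gcongr
          rw [mul_div_left_comm]
          exact mul_le_of_le_one_right (Nat.cast_nonneg N) (div_self_le_one _)
      _ = (N * √(∑ p ∈ s, (p : ℝ)⁻¹ + 1)) ^ 2 := by
          rw [mul_pow, Real.sq_sqrt (by positivity)]
          ring
  exact (abs_le_of_sq_le_sq' hsq (by positivity)).2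

lemma sum_inv_mul_sum_eq_add_add (hF0 : ∀ n, N < n → F n = 0) {s : Finset ℕ}
    (hs : ∀ p ∈ s, 0 < p) :
    ((∑ p ∈ s, (p : ℝ)⁻¹ : ℝ) : 𝕜) * ∑ n ∈ Ioc 0 N, F n * u n =
      ∑ n ∈ Ioc 0 N, F n * u n * ((∑ p ∈ s, (p : ℝ)⁻¹ - #{p ∈ s | p ∣ n} : ℝ) : 𝕜) +
      ∑ p ∈ s, ∑ k ∈ Ioc 0 N, F (p * k) * (u (p * k) - u p * u k) +
      ∑ k ∈ Ioc 0 N, u k * ∑ p ∈ s, F (p * k) * u p := by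
  have hswap : ∑ k ∈ Ioc 0 N, u k * ∑ p ∈ s, F (p * k) * u p =
      ∑ p ∈ s, ∑ k ∈ Ioc 0 N, F (p * k) * (u p * u k) := by
    simp only [mul_sum]
    rw [sum_comm]
    exact sum_congr rfl fun p _ => sum_congr rfl fun k _ => by ring
  have hweighted := sum_mul_card_filter_dvd (N := N) (f := fun n => F n * u n)
    (fun n hn => by simp [hF0 n hn]) hs
  simp only [map_sub, RCLike.ofReal_natCast, mul_sub, sum_sub_distrib, hweighted, hswap,
    ← sum_mul]
  ring

theorem katai_inequality (hu_mult : ∀ m n : ℕ, Nat.Coprime m n → u (m * n) = u m * u n)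
    (hu_bd : ∀ n, ‖u n‖ ≤ 1) (hF : ∀ n, ‖F n‖ ≤ 1) (hF0 : ∀ n, N < n → F n = 0)
    {s : Finset ℕ} (hs : ∀ p ∈ s, p.Prime) (hA1 : 1 ≤ ∑ p ∈ s, (p : ℝ)⁻¹) (hN : 2 * #s ≤ N)
    (hcorr : ∀ p ∈ s, ∀ q ∈ s, p ≠ q →
      #s ^ 2 * ‖∑ k ∈ Ioc 0 N, F (p * k) * conj (F (q * k))‖ ≤ N) :
    √(∑ p ∈ s, (p : ℝ)⁻¹) * ‖∑ n ∈ Ioc 0 N, F n * u n‖ ≤ 7 * N := by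
  have hpos : ∀ p ∈ s, 0 < p := fun p hp => (hs p hp).pos
  have hcop : (s : Set ℕ).Pairwise Nat.Coprime := fun p hp q hq hpq =>
    (Nat.coprime_primes (hs p hp) (hs q hq)).2 hpq
  have hvar := norm_sum_mul_sub_card_filter_dvd_le (f := fun n => F n * u n)
    (fun n => (norm_mul_le _ _).trans (mul_le_one₀ (hF n) (norm_nonneg _) (hu_bd n))) hcop hN
  have hmult : ‖∑ p ∈ s, ∑ k ∈ Ioc 0 N, F (p * k) * (u (p * k) - u p * u k)‖ ≤ N * 4 :=
    calc _ ≤ ∑ p ∈ s, 2 * N * ((p : ℝ) ^ 2)⁻¹ := norm_sum_le_of_le s fun p hp =>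
          norm_sum_mul_prime_mul_sub_le hu_mult hu_bd hF hF0 (hs p hp)
      _ ≤ 2 * N * 2 := by
          rw [← mul_sum]
          gcongr
          exact sum_inv_sq_le_two s
      _ = N * 4 := by ring
  have hbilin := norm_sum_mul_sum_dilates_le hu_bd hF hF0 hpos hcorr
  have hdecomp := sum_inv_mul_sum_eq_add_add (u := u) hF0 hpos
  set A := ∑ p ∈ s, (p : ℝ)⁻¹
  have hsqrt : ∀ x ≤ 2 * A, √x ≤ 3 / 2 * √A := fun x hx => by
    rw [Real.sqrt_le_left (by positivity), mul_pow, Real.sq_sqrt (by positivity)]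
    linarith
  have hA_mul : A * ‖∑ n ∈ Ioc 0 N, F n * u n‖ ≤ √A * (7 * N) :=
    calc A * ‖∑ n ∈ Ioc 0 N, F n * u n‖ = ‖(A : 𝕜) * ∑ n ∈ Ioc 0 N, F n * u n‖ := by
          rw [norm_mul, RCLike.norm_of_nonneg (by positivity)]
      _ ≤ N * √(2 * A) + N * 4 + N * √(A + 1) := by
          rw [hdecomp]
          exact norm_add₃_le.trans (add_le_add (add_le_add hvar hmult) hbilin)
      _ ≤ N * (3 / 2 * √A) + N * (4 * √A) + N * (3 / 2 * √A) := by
          gcongr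
          · exact hsqrt _ le_rfl
          · linarith [Real.one_le_sqrt.2 hA1]
          · exact hsqrt _ (by linarith)
      _ = √A * (7 * N) := by ring
  refine le_of_mul_le_mul_left ?_ (Real.sqrt_pos.2 (zero_lt_one.trans_le hA1))
  rwa [← mul_assoc, Real.mul_self_sqrt (by positivity)]

end Katai

/-! ### Averages over short intervals -/

lemma exists_finset_primes_lt_sum_inv (B : ℝ) :
    ∃ s : Finset ℕ, (∀ p ∈ s, p.Prime) ∧ B < ∑ p ∈ s, (p : ℝ)⁻¹ := by
  have h := (not_summable_iff_tendsto_nat_atTop_of_nonneg fun n =>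
    Set.indicator_nonneg (fun _ _ => by positivity) n).1 not_summable_one_div_on_primes
  obtain ⟨n, hn⟩ := (h.eventually_gt_atTop B).exists
  refine ⟨{p ∈ range n | p.Prime}, fun p hp => (mem_filter.1 hp).2, ?_⟩
  rw [sum_filter]
  simpa [Set.indicator_apply] using hn

lemma UniformMeanZero.eventually_norm_sum_Ioc_mul_le {f : ℕ → 𝕜} (hf : UniformMeanZero f)
    (hf1 : ∀ n, ‖f n‖ ≤ 1) (C : ℝ) {η : ℝ} (hη : 0 < η) :
    ∀ᶠ H : ℕ in atTop, ∀ N ≥ H, ∀ g : ℕ → 𝕜, (∀ n, ‖g n‖ ≤ 1) → VariationLE g (C * N / H) →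
      ‖∑ n ∈ Ioc 0 N, f n * g n‖ ≤ η * N := by
  obtain ⟨L, hL⟩ := hf.exists_norm_sum_mul_le hf1 (half_pos hη)
  filter_upwards [eventually_gt_atTop 0, eventually_ge_atTop ⌈L * (C + 1) / (η / 2)⌉₊]
    with H hH0 hH N hN g hg hgV
  have hH0' : (0 : ℝ) < H := Nat.cast_pos.2 hH0
  have hH' : L * (C + 1) ≤ H * (η / 2) := (div_le_iff₀ (half_pos hη)).1 (Nat.ceil_le.1 hH)
  have hNH : 1 ≤ (N : ℝ) / H := (one_le_div hH0').2 (Nat.cast_le.2 hN)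
  have herror : L * (C * N / H + 1) ≤ η / 2 * N :=
    calc L * (C * N / H + 1) ≤ L * (C * N / H + N / H) := by gcongr
      _ = L * (C + 1) * (N / H) := by ring
      _ ≤ H * (η / 2) * (N / H) := by gcongr
      _ = η / 2 * N := by field_simp
  rw [← Ico_add_one_add_one_eq_Ioc, sum_Ico_eq_sum_range]
  refine (hL g _ hg hgV _ _).trans ?_
  simp only [Nat.add_sub_add_right, tsub_zero]
  linarith

lemma eventually_norm_correlation_le {φ : ℕ → 𝕜} (hφ : ∀ n, ‖φ n‖ ≤ 1) {p q : ℕ}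
    (hpq : UniformMeanZero fun n => φ (p * n) * conj (φ (q * n))) (C : ℝ) {η : ℝ} (hη : 0 < η) :
    ∀ᶠ H : ℕ in atTop, ∀ N ≥ H, ∀ g : ℕ → 𝕜, (∀ n, ‖g n‖ ≤ 1) → VariationLE g (C * N / H) →
      ‖∑ k ∈ Ioc 0 N, φ (p * k) * g (p * k) * conj (φ (q * k) * g (q * k))‖ ≤ η * N := by
  have hbound {f g : ℕ → 𝕜} (hf : ∀ n, ‖f n‖ ≤ 1) (hg : ∀ n, ‖g n‖ ≤ 1) (m n : ℕ) :
      ‖f m * conj (g n)‖ ≤ 1 := by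
    rw [norm_mul, RCLike.norm_conj]
    exact mul_le_one₀ (hf m) (norm_nonneg _) (hg n)
  filter_upwards [hpq.eventually_norm_sum_Ioc_mul_le (fun n => hbound hφ hφ _ _) (2 * C) hη]
    with H hH N hN g hg hgV
  have hmono (d : ℕ) : Monotone fun n => d * n := fun _ _ h => Nat.mul_le_mul_left d h
  have hweight : VariationLE (fun n => g (p * n) * conj (g (q * n))) (2 * C * N / H) := by
    convert (hgV.comp_monotone (hmono p)).mul (hgV.comp_monotone (hmono q)).conj
      (fun n => hg _) (fun n => (RCLike.norm_conj _).trans_le (hg _)) using 1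
    ring
  convert hH N hN _ (fun n => hbound hg hg (p * n) (q * n)) hweight using 3 with k
  rw [map_mul]
  ring

theorem eventually_norm_sum_mul_weight_mul_multiplicative_le {φ u : ℕ → 𝕜} (hφ : ∀ n, ‖φ n‖ ≤ 1)
    (hcorr : ∀ p q, p.Prime → q.Prime → p ≠ q →
      UniformMeanZero fun n => φ (p * n) * conj (φ (q * n)))
    (hu_mult : ∀ m n : ℕ, Nat.Coprime m n → u (m * n) = u m * u n) (hu_bd : ∀ n, ‖u n‖ ≤ 1)
    (C : ℝ) {ε : ℝ} (hε : 0 < ε) :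
    ∀ᶠ H : ℕ in atTop, ∀ N ≥ H, ∀ g : ℕ → 𝕜, (∀ n, ‖g n‖ ≤ 1) → VariationLE g (C * N / H) →
      (∀ n, N < n → g n = 0) → ‖∑ n ∈ Ioc 0 N, φ n * g n * u n‖ ≤ ε * N := by
  obtain ⟨s, hs, hA⟩ := exists_finset_primes_lt_sum_inv (max 1 ((7 / ε) ^ 2))
  obtain ⟨hA1, hAε⟩ := max_lt_iff.1 hA
  have hcorr_s : ∀ᶠ H : ℕ in atTop, ∀ p ∈ s, ∀ q ∈ s, p ≠ q → ∀ N ≥ H, ∀ g : ℕ → 𝕜,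
      (∀ n, ‖g n‖ ≤ 1) → VariationLE g (C * N / H) →
        ‖∑ k ∈ Ioc 0 N, φ (p * k) * g (p * k) * conj (φ (q * k) * g (q * k))‖ ≤
          1 / #s ^ 2 * N := by
    simp only [eventually_all_finset, eventually_all]
    intro p hp q hq hpq
    have : 0 < #s := card_pos.2 ⟨p, hp⟩
    exact eventually_norm_correlation_le hφ (hcorr p q (hs p hp) (hs q hq) hpq) C (by positivity)
  filter_upwards [hcorr_s, eventually_ge_atTop (2 * #s)] with H hH hHs N hN g hg hgV hg0
  have hkatai := katai_inequality (F := fun n => φ n * g n) hu_mult hu_bd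
    (fun n => (norm_mul_le _ _).trans (mul_le_one₀ (hφ n) (norm_nonneg _) (hg n)))
    (fun n hn => by rw [hg0 n hn, mul_zero]) hs hA1.le (hHs.trans hN) fun p hp q hq hpq => by
      have : 0 < #s := card_pos.2 ⟨p, hp⟩
      rw [← le_div_iff₀' (by positivity), div_eq_mul_one_div, mul_comm (N : ℝ)]
      exact hH p hp q hq hpq N hN g hg hgV
  have hsqrt : 7 / ε ≤ √(∑ p ∈ s, (p : ℝ)⁻¹) := Real.le_sqrt_of_sq_le hAε.le
  have h7 := (mul_le_mul_of_nonneg_right hsqrt (norm_nonneg _)).trans hkatai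
  rw [div_mul_eq_mul_div, div_le_iff₀ hε] at h7
  linarith

/-- The weight is `G n = ∑ m ∈ S, c m * 1_{[m, m + H)}(n)`, where the unimodular factor `c m`
rotates the sum over the window at `m` to its absolute value. -/
lemma exists_weight_sum_norm_sum_Ico_eq (f : ℕ → 𝕜) (S : Finset ℕ) (H : ℕ) {T : Finset ℕ}
    (hT : ∀ m ∈ S, Ico m (m + H) ⊆ T) :
    ∃ G : ℕ → 𝕜, (∀ n, ‖G n‖ ≤ min #S H) ∧ VariationLE G (2 * #S) ∧ (∀ n ∉ T, G n = 0) ∧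
      ∑ m ∈ S, ‖∑ n ∈ Ico m (m + H), f n‖ = ‖∑ n ∈ T, f n * G n‖ := by
  choose c hc hfc using fun m => RCLike.exists_norm_eq_mul_self (∑ n ∈ Ico m (m + H), f n)
  refine ⟨fun n => ∑ m ∈ S, c m * if n ∈ Ico m (m + H) then 1 else 0, fun n => ?_, ?_,
    fun n hn => ?_, ?_⟩
  · have hcard : #{m ∈ S | n ∈ Ico m (m + H)} ≤ min #S H := by
      refine le_min (card_filter_le _ _) ?_
      calc #{m ∈ S | n ∈ Ico m (m + H)} ≤ #(Ico (n + 1 - H) (n + 1)) := card_le_card fun m hm => by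
            simp only [mem_filter, mem_Ico] at hm ⊢
            omega
        _ ≤ H := by
            rw [Nat.card_Ico]
            omega
    simp only [mul_ite, mul_one, mul_zero, ← sum_filter]
    refine (norm_sum_le_of_le _ fun m _ => (hc m).le).trans ?_
    rw [sum_const, nsmul_one]
    exact_mod_cast hcard
  · convert VariationLE.sum fun m (_ : m ∈ S) =>
      (variationLE_ite_mem_Ico (𝕜 := 𝕜) m (m + H)).const_mul (c m) using 1
    simp [hc, mul_comm]
  · exact sum_eq_zero fun m hm => by rw [if_neg fun h => hn (hT m hm h), mul_zero]
  · have hlinear : ((∑ m ∈ S, ‖∑ n ∈ Ico m (m + H), f n‖ : ℝ) : 𝕜) =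
        ∑ n ∈ T, f n * ∑ m ∈ S, c m * if n ∈ Ico m (m + H) then 1 else 0 := by
      push_cast
      simp only [hfc, mul_sum, mul_ite, mul_one, mul_zero]
      rw [sum_comm]
      refine sum_congr rfl fun m hm => ?_
      rw [← sum_filter, filter_mem_eq_inter, inter_eq_right.2 (hT m hm)]
      exact sum_congr rfl fun n _ => mul_comm _ _
    rw [← hlinear, RCLike.norm_of_nonneg (sum_nonneg fun _ _ => norm_nonneg _)]

lemma exists_weight_short_interval_average_eq (f : ℕ → 𝕜) {H M : ℕ} (hH : 0 < H) (hM : 0 < M) :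
    ∃ g : ℕ → 𝕜, (∀ n, ‖g n‖ ≤ 1) ∧ VariationLE g (2 * (2 * M + H : ℕ) / H) ∧
      (∀ n, 2 * M + H < n → g n = 0) ∧
      (M : ℝ)⁻¹ * ∑ m ∈ Ico M (2 * M), (H : ℝ)⁻¹ * ‖∑ n ∈ Ico m (m + H), f n‖ =
        (max M H : ℝ)⁻¹ * ‖∑ n ∈ Ioc 0 (2 * M + H), f n * g n‖ := by
  have hwindow : ∀ m ∈ Ico M (2 * M), Ico m (m + H) ⊆ Ioc 0 (2 * M + H) := by
    intro m hm n hn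
    simp only [mem_Ico, mem_Ioc] at hm hn ⊢
    omega
  have hcard : #(Ico M (2 * M)) = M := by
    rw [Nat.card_Ico]
    omega
  obtain ⟨G, hG, hGV, hG0, hsum⟩ := exists_weight_sum_norm_sum_Ico_eq f (Ico M (2 * M)) H hwindow
  simp only [hcard, Nat.cast_min] at hG hGV
  have hM' : (0 : ℝ) < M := Nat.cast_pos.2 hM
  have hH' : (0 : ℝ) < H := Nat.cast_pos.2 hH
  set K : ℝ := min (M : ℝ) H
  have hK : 0 < K := lt_min hM' hH'
  have hMH : max (M : ℝ) H * K = M * H := max_mul_min _ _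
  have hnorm : ‖(K : 𝕜)⁻¹‖ = K⁻¹ := by rw [norm_inv, RCLike.norm_of_nonneg hK.le]
  refine ⟨fun n => (K : 𝕜)⁻¹ * G n, fun n => ?_, (hGV.const_mul _).mono ?_, fun n hn =>
    mul_eq_zero_of_right _ (hG0 n fun h => hn.not_ge (mem_Ioc.1 h).2), ?_⟩
  · rw [norm_mul, hnorm, inv_mul_le_one₀ hK]
    exact hG n
  · have hmax : max (M : ℝ) H ≤ 2 * M + H := max_le (by linarith) (by linarith)
    rw [hnorm, inv_mul_le_iff₀ hK, ← mul_div_assoc, le_div_iff₀ hH']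
    push_cast
    linarith [mul_le_mul_of_nonneg_right hmax hK.le]
  · simp only [mul_left_comm _ (K : 𝕜)⁻¹]
    rw [← mul_sum, ← mul_sum, norm_mul, hnorm, hsum, ← mul_assoc, ← mul_assoc, ← mul_inv,
      ← mul_inv, hMH]

theorem katai_criterion_short_interval_average {φ u : ℕ → 𝕜} (hφ : ∀ n, ‖φ n‖ ≤ 1)
    (hcorr : ∀ p q, p.Prime → q.Prime → p ≠ q →
      UniformMeanZero fun n => φ (p * n) * conj (φ (q * n)))
    (hu_mult : ∀ m n : ℕ, Nat.Coprime m n → u (m * n) = u m * u n) (hu_bd : ∀ n, ‖u n‖ ≤ 1)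
    {ε : ℝ} (hε : 0 < ε) :
    ∀ᶠ H : ℕ in atTop, ∀ M : ℕ, 1 ≤ M → (M : ℝ)⁻¹ * ∑ m ∈ Ico M (2 * M),
      (H : ℝ)⁻¹ * ‖∑ n ∈ Ico m (m + H), φ n * u n‖ < ε := by
  filter_upwards [eventually_gt_atTop 0, eventually_norm_sum_mul_weight_mul_multiplicative_le hφ
    hcorr hu_mult hu_bd 2 (by positivity : 0 < ε / 4)] with H hH0 hH M hM
  obtain ⟨g, hg, hgV, hg0, havg⟩ :=
    exists_weight_short_interval_average_eq (fun n => φ n * u n) hH0 hM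
  have hmax : 0 < max (M : ℝ) H := lt_max_of_lt_left (Nat.cast_pos.2 hM)
  rw [havg, inv_mul_lt_iff₀ hmax]
  simp only [mul_right_comm (φ _) (u _)]
  calc ‖∑ n ∈ Ioc 0 (2 * M + H), φ n * g n * u n‖ ≤ ε / 4 * (2 * M + H : ℕ) :=
        hH _ (Nat.le_add_left _ _) g hg hgV hg0
    _ = ε / 4 * (2 * M + H) := by push_cast; rfl
    _ ≤ ε / 4 * (2 * max (M : ℝ) H + max (M : ℝ) H) := by
        gcongr
        · exact le_max_left _ _
        · exact le_max_right _ _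
    _ < max (M : ℝ) H * ε := by nlinarith

lemma uniformMeanZero_fourierChar_eval_dilates {P : ℝ[X]} (hP : 0 < P.natDegree)
    (hirr : Irrational P.leadingCoeff) {p q : ℕ} (hpq : p ≠ q) :
    UniformMeanZero fun n : ℕ =>
      (𝐞 (P.eval ((p * n : ℕ) : ℝ)) : ℂ) * conj (𝐞 (P.eval ((q * n : ℕ) : ℝ)) : ℂ) := by
  obtain ⟨d, hd⟩ := Nat.exists_eq_add_one.2 hP
  set Q : ℝ[X] := P.comp (.C (p : ℝ) * .X) - P.comp (.C (q : ℝ) * .X) with hQ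
  have hcoeff : ∀ n, Q.coeff n = ((p : ℝ) ^ n - (q : ℝ) ^ n) * P.coeff n := fun n => by
    rw [hQ, Polynomial.coeff_sub, Polynomial.comp_C_mul_X_coeff, Polynomial.comp_C_mul_X_coeff]
    ring
  convert uniformMeanZero_fourierChar_eval (P := Q) (d := d) ?_ ?_ using 2 with n
  · rw [← coe_fourierChar_sub, hQ]
    simp
  · rw [Polynomial.natDegree_le_iff_coeff_eq_zero]
    intro n hn
    rw [hcoeff, Polynomial.coeff_eq_zero_of_natDegree_lt (hd ▸ hn), mul_zero]
  · have hne : (p : ℤ) ^ (d + 1) - (q : ℤ) ^ (d + 1) ≠ 0 := sub_ne_zero.2 fun h =>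
      hpq (Nat.pow_left_injective d.succ_ne_zero (by exact_mod_cast h))
    rw [hcoeff, ← hd, Polynomial.coeff_natDegree, hd]
    exact_mod_cast hirr.intCast_mul hne

theorem polynomial_short_interval_orthogonality_average_general
    (u : ℕ → ℂ) (hu_mult : ∀ m n : ℕ, Nat.Coprime m n → u (m * n) = u m * u n)
    (hu_bd : ∀ n, ‖u n‖ ≤ 1)
    (P : ℝ[X]) (hPdeg : 0 < P.natDegree) (hPirr : Irrational P.leadingCoeff) :
    ∀ ε > (0:ℝ), ∃ H₀ : ℕ, ∀ H M : ℕ, H₀ ≤ H → 1 ≤ M →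
      (M : ℝ)⁻¹ * ∑ m ∈ Ico M (2 * M), (H : ℝ)⁻¹ *
        ‖∑ n ∈ Ico m (m + H),
          Complex.exp (2 * Real.pi * Complex.I * ((P.eval (n : ℝ) : ℝ) : ℂ)) * u n‖ < ε := by
  intro ε hε
  have hexp (x : ℝ) : Complex.exp (2 * Real.pi * Complex.I * x) = 𝐞 x := by
    rw [Real.fourierChar_apply]
    push_cast
    ring_nf
  simp only [hexp]
  obtain ⟨H₀, hH₀⟩ := eventually_atTop.1 <| katai_criterion_short_interval_average
    (φ := fun n : ℕ => (𝐞 (P.eval (n : ℝ)) : ℂ)) (fun _ => (Circle.norm_coe _).le)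
    (fun _ _ _ _ hpq => uniformMeanZero_fourierChar_eval_dilates hPdeg hPirr hpq)
    hu_mult hu_bd hε
  exact ⟨H₀, fun H M hH hM => hH₀ H hH M hM⟩

end

/-- **Theorem 1.6.** For every multiplicative `u : ℕ → ℂ` with `|u| ≤ 1` and every
non-constant real polynomial `P` with irrational leading coefficient,
`(1/M) ∑_{M ≤ m < 2M} (1/H) |∑_{m ≤ n < m+H} e^{2πi P(n)} u(n)| → 0`
as `M → ∞`, `H → ∞`, `H/M → 0`: for every `ε > 0` there are `H₀ ∈ ℕ` and `δ > 0` such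
that for all integers `H ≥ H₀` and `M ≥ 1` with `H/M ≤ δ` the average is `< ε`. -/
theorem polynomial_short_interval_orthogonality_average
    (u : ℕ → ℂ) (hu_mult : ∀ m n : ℕ, Nat.Coprime m n → u (m * n) = u m * u n)
    (hu_bd : ∀ n, ‖u n‖ ≤ 1)
    (P : Polynomial ℝ) (hPdeg : 0 < P.natDegree) (hPirr : Irrational P.leadingCoeff) :
    ∀ ε > (0:ℝ), ∃ H₀ : ℕ, ∃ δ > (0:ℝ), ∀ H M : ℕ, H₀ ≤ H → 1 ≤ M →
      (H : ℝ) / (M : ℝ) ≤ δ →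
      (M : ℝ)⁻¹ * ∑ m ∈ Finset.Ico M (2 * M), (H : ℝ)⁻¹ *
        ‖∑ n ∈ Finset.Ico m (m + H),
          Complex.exp (2 * Real.pi * Complex.I * ((P.eval (n : ℝ) : ℝ) : ℂ)) * u n‖ < ε := by
  intro ε hε
  obtain ⟨H₀, hH₀⟩ :=
    polynomial_short_interval_orthogonality_average_general u hu_mult hu_bd P hPdeg hPirr ε hε
  exact ⟨H₀, 1, one_pos, fun H M hH hM _ => hH₀ H M hH hM⟩
end

section
/- (Bourgain–Sarnak–Ziegler criterion.) Let (a_n)_{n≥1} be a bounded sequence of complex numbers. Assume that for every ε > 0 there exists K such that for all distinct primes r, s ≥ K, limsup_{N→∞} | (1/N) Σ_{n ≤ N} a_{rn} conj(a_{sn}) | ≤ ε. Then for every multiplicative function u : ℕ → ℂ with |u(n)| ≤ 1 for all n, one has (1/N) Σ_{n ≤ N} a_n u(n) → 0 as N → ∞. -/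
open MeasureTheory Filter

/-!
For a finite set `P` of primes with `L = ∑_{p ∈ P} 1/p`, the Turán–Kubilius inequality says that
most `n ≤ N` have about `L` divisors in `P`. Hence `L ∑_{n ≤ N} a_n u(n)` is, up to an error
`O(N √L)`, the sum of `a_{pm} u(pm)` over `p ∈ P` and `pm ≤ N`. If `P` consists of large primes,
`u(pm)` may be replaced by `u(p) u(m)`, and the resulting bilinear sum is handled by Cauchy–Schwarz
in `m`, which removes `u` and leaves the correlations of `a_{pm}` with `a_{qm}`. Cauchy–Schwarz is
applied to each dyadic block of `P` separately: the loss from the diagonal `p = q` is then summable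
over the blocks, whereas the loss from the off-diagonal terms is proportional to `L`. Since the
reciprocals of the primes diverge, `L` can be taken as large as desired.
-/

section

open Finset

/-- The number of elements of `P` dividing `n`; for a set `P` of primes this is the truncation
`ω_P(n)` of the number of prime divisors of `n`. -/
def divisorCount (P : Finset ℕ) (n : ℕ) : ℕ := #{p ∈ P | p ∣ n}

/-- The sum of the reciprocals of the elements of `P`, which is the approximate mean value of
`divisorCount P`. An element `0` contributes `0`. -/
noncomputable def recipSum (P : Finset ℕ) : ℝ := ∑ p ∈ P, (p : ℝ)⁻¹

lemma recipSum_nonneg (P : Finset ℕ) : 0 ≤ recipSum P := sum_nonneg fun _ _ => by positivity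

lemma exists_finset_le_recipSum {S : Set ℕ}
    (hS : ¬ Summable (S.indicator fun n : ℕ => (1 : ℝ) / n)) (K : ℕ) (B : ℝ) :
    ∃ P : Finset ℕ, (∀ p ∈ P, p ∈ S ∧ K ≤ p) ∧ B ≤ recipSum P := by
  classical
  by_contra! hlt
  have htail : Summable ((S ∩ Set.Ici K).indicator fun n : ℕ => (1 : ℝ) / n) := by
    refine summable_of_sum_le (c := B) (fun n => Set.indicator_nonneg (fun _ _ => by positivity) n)
      fun T => ?_
    rw [sum_indicator_eq_sum_filter]
    simpa only [recipSum, one_div] using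
      (hlt {p ∈ T | p ∈ S ∩ Set.Ici K} fun p hp => (mem_filter.1 hp).2).le
  refine hS ((summable_congr_cofinite ?_).1 htail)
  rw [Nat.cofinite_eq_atTop]
  filter_upwards [eventually_ge_atTop K] with n hn
  simp [Set.indicator_apply, hn]

lemma sum_Icc_filter_dvd {M : Type*} [AddCommMonoid M] (f : ℕ → M) (d N : ℕ) :
    ∑ n ∈ Icc 1 N with d ∣ n, f n = ∑ m ∈ Icc 1 (N / d), f (d * m) := by
  obtain rfl | hd := d.eq_zero_or_pos
  · rw [Nat.div_zero, Icc_eq_empty_of_lt one_pos, sum_empty]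
    refine sum_eq_zero fun n hn => ?_
    simp only [mem_filter, mem_Icc, zero_dvd_iff] at hn
    omega
  symm
  refine sum_nbij (d * ·) (fun m hm => ?_) (fun _ _ _ _ => Nat.eq_of_mul_eq_mul_left hd)
    (fun n hn => ?_) fun _ _ => rfl
  · simp only [mem_Icc, mem_filter, Nat.le_div_iff_mul_le hd] at hm ⊢
    exact ⟨⟨Nat.mul_pos hd hm.1, mul_comm d m ▸ hm.2⟩, dvd_mul_right d m⟩
  · simp only [coe_filter, mem_Icc, Set.mem_ofPred_eq] at hn
    obtain ⟨⟨hpos, hle⟩, m, rfl⟩ := hn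
    refine ⟨m, ?_, rfl⟩
    rw [coe_Icc, Set.mem_Icc, Nat.le_div_iff_mul_le hd, mul_comm m]
    exact ⟨Nat.pos_of_mul_pos_left hpos, hle⟩

lemma card_Icc_filter_dvd (d N : ℕ) : #{n ∈ Icc 1 N | d ∣ n} = N / d :=
  Nat.Ioc_filter_dvd_card_eq_div N d

lemma sum_divisorCount_nsmul {M : Type*} [AddCommMonoid M] (P : Finset ℕ) (f : ℕ → M) (N : ℕ) :
    ∑ n ∈ Icc 1 N, divisorCount P n • f n = ∑ p ∈ P, ∑ m ∈ Icc 1 (N / p), f (p * m) := by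
  simp_rw [divisorCount, ← sum_Icc_filter_dvd, ← sum_const, sum_filter]
  exact sum_comm

lemma sum_divisorCount (P : Finset ℕ) (N : ℕ) :
    ∑ n ∈ Icc 1 N, divisorCount P n = ∑ p ∈ P, N / p := by
  simpa using sum_divisorCount_nsmul P (fun _ => (1 : ℕ)) N

lemma sum_divisorCount_sq (P : Finset ℕ) (N : ℕ) :
    ∑ n ∈ Icc 1 N, divisorCount P n ^ 2 = ∑ p ∈ P, ∑ q ∈ P, N / p.lcm q := by
  simp_rw [← card_Icc_filter_dvd, Nat.lcm_dvd_iff, divisorCount, card_filter, sq, sum_mul_sum,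
    mul_boole, ← ite_and, and_comm]
  rw [sum_comm]
  exact sum_congr rfl fun _ _ => sum_comm

lemma mul_recipSum_sub_card_le_sum_divisorCount (P : Finset ℕ) (N : ℕ) :
    N * recipSum P - #P ≤ ∑ n ∈ Icc 1 N, (divisorCount P n : ℝ) := by
  rw [← Nat.cast_sum, sum_divisorCount, Nat.cast_sum, recipSum, mul_sum, card_eq_sum_ones,
    Nat.cast_sum, ← sum_sub_distrib]
  refine sum_le_sum fun p _ => ?_
  rw [Nat.cast_one, ← div_eq_mul_inv, ← Nat.floor_div_eq_div (K := ℝ)]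
  exact (Nat.sub_one_lt_floor _).le

lemma sum_divisorCount_sq_le {P : Finset ℕ} (hP : (P : Set ℕ).Pairwise Nat.Coprime) (N : ℕ) :
    ∑ n ∈ Icc 1 N, (divisorCount P n : ℝ) ^ 2 ≤ N * recipSum P ^ 2 + N * recipSum P := by
  have hlcm : ∀ p ∈ P, ∀ q ∈ P, ((N / p.lcm q : ℕ) : ℝ) ≤
      N * ((p : ℝ)⁻¹ * (q : ℝ)⁻¹) + if p = q then N * (p : ℝ)⁻¹ else 0 := by
    intro p hp q hq
    refine Nat.cast_div_le.trans ?_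
    obtain rfl | hpq := eq_or_ne p q
    · rw [Nat.lcm_self, if_pos rfl, div_eq_mul_inv]
      exact le_add_of_nonneg_left (by positivity)
    · rw [(hP hp hq hpq).lcm_eq_mul, if_neg hpq, add_zero, Nat.cast_mul, div_eq_mul_inv, mul_inv]
  calc ∑ n ∈ Icc 1 N, (divisorCount P n : ℝ) ^ 2
      = ∑ p ∈ P, ∑ q ∈ P, ((N / p.lcm q : ℕ) : ℝ) := mod_cast sum_divisorCount_sq P N
    _ ≤ ∑ p ∈ P, ∑ q ∈ P, (N * ((p : ℝ)⁻¹ * (q : ℝ)⁻¹) + if p = q then N * (p : ℝ)⁻¹ else 0) :=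
      sum_le_sum fun p hp => sum_le_sum fun q hq => hlcm p hp q hq
    _ = N * recipSum P ^ 2 + N * recipSum P := by
      simp only [sum_add_distrib, sum_ite_eq, sum_ite_mem, inter_self, ← mul_sum, ← sum_mul,
        recipSum, sq]

theorem turan_kubilius {P : Finset ℕ} (hP : (P : Set ℕ).Pairwise Nat.Coprime) (N : ℕ) :
    ∑ n ∈ Icc 1 N, (divisorCount P n - recipSum P) ^ 2 ≤ (N + 2 * #P) * recipSum P := by
  have hmean := mul_le_mul_of_nonneg_left (mul_recipSum_sub_card_le_sum_divisorCount P N)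
    (recipSum_nonneg P)
  calc ∑ n ∈ Icc 1 N, (divisorCount P n - recipSum P) ^ 2
      = ∑ n ∈ Icc 1 N, (divisorCount P n : ℝ) ^ 2
          - 2 * (recipSum P * ∑ n ∈ Icc 1 N, (divisorCount P n : ℝ)) + N * recipSum P ^ 2 := by
        simp only [sub_sq, sum_add_distrib, sum_sub_distrib, ← mul_sum, ← sum_mul, sum_const,
          Nat.card_Icc, add_tsub_cancel_right, nsmul_eq_mul]
        ring
    _ ≤ (N + 2 * #P) * recipSum P := by linarith [sum_divisorCount_sq_le hP N]

lemma sum_abs_divisorCount_sub_recipSum_le {P : Finset ℕ}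
    (hP : (P : Set ℕ).Pairwise Nat.Coprime) (N : ℕ) :
    ∑ n ∈ Icc 1 N, |divisorCount P n - recipSum P| ≤ √(N * ((N + 2 * #P) * recipSum P)) := by
  refine Real.le_sqrt_of_sq_le (sq_sum_le_card_mul_sum_sq.trans ?_)
  simp only [sq_abs, Nat.card_Icc, add_tsub_cancel_right]
  gcongr
  exact turan_kubilius hP N

theorem norm_recipSum_smul_sum_sub_sum_dilates_le {𝕜 E : Type*} [RCLike 𝕜]
    [SeminormedAddCommGroup E] [NormedSpace 𝕜 E] {f : ℕ → E} {C : ℝ} (hf : ∀ n, ‖f n‖ ≤ C)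
    {P : Finset ℕ} (hP : (P : Set ℕ).Pairwise Nat.Coprime) (N : ℕ) :
    ‖(recipSum P : 𝕜) • ∑ n ∈ Icc 1 N, f n - ∑ p ∈ P, ∑ m ∈ Icc 1 (N / p), f (p * m)‖ ≤
      C * √(N * ((N + 2 * #P) * recipSum P)) := by
  have hC : 0 ≤ C := (norm_nonneg _).trans (hf 0)
  rw [← sum_divisorCount_nsmul, norm_sub_rev, smul_sum, ← sum_sub_distrib]
  calc ‖∑ n ∈ Icc 1 N, (divisorCount P n • f n - (recipSum P : 𝕜) • f n)‖
      ≤ ∑ n ∈ Icc 1 N, C * |divisorCount P n - recipSum P| := by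
        refine norm_sum_le_of_le _ fun n _ => ?_
        rw [← Nat.cast_smul_eq_nsmul 𝕜, ← sub_smul, norm_smul, mul_comm C, ← RCLike.ofReal_natCast,
          ← RCLike.ofReal_sub, RCLike.norm_ofReal]
        gcongr
        exact hf n
    _ ≤ C * √(N * ((N + 2 * #P) * recipSum P)) := by
        rw [← mul_sum]
        gcongr
        exact sum_abs_divisorCount_sub_recipSum_le hP N


/-- The bilinear (type II) sum `∑ c_p u_m a_{pm}` over `p ∈ P` and `m ≥ 1` with `pm ≤ N`. -/
def bilinearSum {R M : Type*} [Semiring R] [AddCommMonoid M] [Module R M] (c u : ℕ → R) (a : ℕ → M)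
    (P : Finset ℕ) (N : ℕ) : M :=
  ∑ p ∈ P, ∑ m ∈ Icc 1 (N / p), (c p * u m) • a (p * m)

lemma norm_sum_dilates_sub_bilinearSum_le {𝕜 E : Type*} [NormedField 𝕜]
    [SeminormedAddCommGroup E] [NormedSpace 𝕜 E] {a : ℕ → E} {u : ℕ → 𝕜} {C : ℝ} {P : Finset ℕ}
    (ha : ∀ n, ‖a n‖ ≤ C) (hu : ∀ n, ‖u n‖ ≤ 1)
    (hmul : ∀ p ∈ P, ∀ m, ¬ p ∣ m → u (p * m) = u p * u m) (N : ℕ) :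
    ‖∑ p ∈ P, ∑ m ∈ Icc 1 (N / p), u (p * m) • a (p * m) - bilinearSum u u a P N‖ ≤
      2 * C * N * ∑ p ∈ P, ((p : ℝ)⁻¹) ^ 2 := by
  have hC : 0 ≤ C := (norm_nonneg _).trans (ha 0)
  have hterm : ∀ p ∈ P, ∀ m,
      ‖u (p * m) • a (p * m) - (u p * u m) • a (p * m)‖ ≤ if p ∣ m then 2 * C else 0 := by
    intro p hp m
    split_ifs with hpm
    · rw [← sub_smul, norm_smul]
      gcongr
      · calc ‖u (p * m) - u p * u m‖ ≤ ‖u (p * m)‖ + ‖u p‖ * ‖u m‖ :=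
              (norm_sub_le _ _).trans_eq (by rw [norm_mul])
          _ ≤ 1 + 1 := add_le_add (hu _) (mul_le_one₀ (hu p) (norm_nonneg _) (hu m))
          _ = 2 := one_add_one_eq_two
      · exact ha _
    · rw [hmul p hp m hpm, sub_self, norm_zero]
  rw [bilinearSum, ← sum_sub_distrib, mul_sum]
  refine norm_sum_le_of_le _ fun p hp => ?_
  rw [← sum_sub_distrib]
  calc ‖∑ m ∈ Icc 1 (N / p), (u (p * m) • a (p * m) - (u p * u m) • a (p * m))‖
      ≤ ∑ m ∈ Icc 1 (N / p), if p ∣ m then 2 * C else 0 :=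
        norm_sum_le_of_le _ fun m _ => hterm p hp m
    _ = 2 * C * (N / p / p : ℕ) := by
        rw [← sum_filter, sum_const, card_Icc_filter_dvd, nsmul_eq_mul, mul_comm]
    _ ≤ 2 * C * (N / (p * p : ℕ)) := by
        rw [Nat.div_div_eq_div_mul]
        gcongr
        exact Nat.cast_div_le
    _ = 2 * C * N * ((p : ℝ)⁻¹) ^ 2 := by
        rw [Nat.cast_mul, div_eq_mul_inv, mul_inv]
        ring

variable {𝕜 E : Type*} [RCLike 𝕜] [SeminormedAddCommGroup E] [InnerProductSpace 𝕜 E]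

lemma norm_sum_smul_sum_sq_le {ι κ : Type*} (P : Finset ι) (T : Finset κ) (x : ι → κ → E)
    {u : κ → 𝕜} (hu : ∀ m, ‖u m‖ ≤ 1) :
    ‖∑ m ∈ T, u m • ∑ p ∈ P, x p m‖ ^ 2 ≤
      #T * ∑ p ∈ P, ∑ q ∈ P, ‖∑ m ∈ T, inner 𝕜 (x p m) (x q m)‖ := by
  have htriangle : ‖∑ m ∈ T, u m • ∑ p ∈ P, x p m‖ ≤ ∑ m ∈ T, ‖∑ p ∈ P, x p m‖ :=
    norm_sum_le_of_le _ fun m _ => by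
      rw [norm_smul]
      exact mul_le_of_le_one_left (norm_nonneg _) (hu m)
  have hexpand : ((∑ m ∈ T, ‖∑ p ∈ P, x p m‖ ^ 2 : ℝ) : 𝕜) =
      ∑ p ∈ P, ∑ q ∈ P, ∑ m ∈ T, inner 𝕜 (x p m) (x q m) := by
    push_cast
    simp_rw [← inner_self_eq_norm_sq_to_K (𝕜 := 𝕜), sum_inner, inner_sum]
    rw [sum_comm]
    exact sum_congr rfl fun _ _ => sum_comm
  calc ‖∑ m ∈ T, u m • ∑ p ∈ P, x p m‖ ^ 2
      ≤ (∑ m ∈ T, ‖∑ p ∈ P, x p m‖) ^ 2 := by gcongr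
    _ ≤ #T * ∑ m ∈ T, ‖∑ p ∈ P, x p m‖ ^ 2 := sq_sum_le_card_mul_sum_sq
    _ = #T * ‖∑ p ∈ P, ∑ q ∈ P, ∑ m ∈ T, inner 𝕜 (x p m) (x q m)‖ := by
      rw [← hexpand, RCLike.norm_ofReal, abs_of_nonneg (sum_nonneg fun _ _ => sq_nonneg _)]
    _ ≤ #T * ∑ p ∈ P, ∑ q ∈ P, ‖∑ m ∈ T, inner 𝕜 (x p m) (x q m)‖ := by
      gcongr
      exact norm_sum_le_of_le _ fun _ _ => norm_sum_le _ _

lemma norm_sum_sum_smul_sq_le {ι κ : Type*} [DecidableEq κ] {P : Finset ι} {S : ι → Finset κ}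
    {T : Finset κ} (hS : ∀ p ∈ P, S p ⊆ T) (x : ι → κ → E) {c : ι → 𝕜} {u : κ → 𝕜}
    (hc : ∀ p, ‖c p‖ ≤ 1) (hu : ∀ m, ‖u m‖ ≤ 1) :
    ‖∑ p ∈ P, ∑ m ∈ S p, (c p * u m) • x p m‖ ^ 2 ≤
      #T * ∑ p ∈ P, ∑ q ∈ P, ‖∑ m ∈ S p ∩ S q, inner 𝕜 (x p m) (x q m)‖ := by
  set y : ι → κ → E := fun p m => if m ∈ S p then c p • x p m else 0 with hy
  have hswap : ∑ p ∈ P, ∑ m ∈ S p, (c p * u m) • x p m = ∑ m ∈ T, u m • ∑ p ∈ P, y p m := by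
    simp_rw [hy, smul_sum, smul_ite, smul_zero]
    rw [sum_comm]
    refine sum_congr rfl fun p hp => ?_
    rw [sum_ite_mem, inter_eq_right.2 (hS p hp)]
    exact sum_congr rfl fun m _ => by rw [smul_smul, mul_comm]
  have hpair : ∀ p ∈ P, ∀ q ∈ P, ‖∑ m ∈ T, inner 𝕜 (y p m) (y q m)‖ ≤
      ‖∑ m ∈ S p ∩ S q, inner 𝕜 (x p m) (x q m)‖ := by
    intro p hp q _
    have hfactor : ∑ m ∈ T, inner 𝕜 (y p m) (y q m) =
        starRingEnd 𝕜 (c p) * c q * ∑ m ∈ S p ∩ S q, inner 𝕜 (x p m) (x q m) := by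
      rw [← inter_eq_right.2 (inter_subset_left.trans (hS p hp)), ← sum_ite_mem, mul_sum]
      refine sum_congr rfl fun m _ => ?_
      by_cases hmp : m ∈ S p <;> by_cases hmq : m ∈ S q <;>
        simp [hy, hmp, hmq, inner_smul_left, inner_smul_right]
      ring
    rw [hfactor, norm_mul, norm_mul, RCLike.norm_conj]
    exact mul_le_of_le_one_left (norm_nonneg _) (mul_le_one₀ (hc p) (norm_nonneg _) (hc q))
  rw [hswap]
  refine (norm_sum_smul_sum_sq_le P T y hu).trans ?_
  gcongr with p hp q hq
  exact hpair p hp q hq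

variable (𝕜) in
/-- The dilates `a_{pm}` and `a_{qm}` by distinct `p, q ∈ P` have mean correlation at most `κ`
over the range `pm, qm ≤ N`, that is, `m ≤ N / max p q`. -/
def PairCorrelationsLE (a : ℕ → E) (κ : ℝ) (N : ℕ) (P : Finset ℕ) : Prop :=
  (P : Set ℕ).Pairwise fun p q =>
    ‖∑ m ∈ Icc 1 (N / max p q), inner 𝕜 (a (p * m)) (a (q * m))‖ ≤ κ * (N / max p q : ℕ)

lemma Icc_div_inter_Icc_div {p q : ℕ} (hp : 0 < p) (hq : 0 < q) (N : ℕ) :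
    Icc 1 (N / p) ∩ Icc 1 (N / q) = Icc 1 (N / max p q) := by
  obtain hpq | hqp := le_total p q
  · rw [max_eq_right hpq]
    exact inter_eq_right.2 (Icc_subset_Icc_right (Nat.div_le_div_left hpq hp))
  · rw [max_eq_left hqp]
    exact inter_eq_left.2 (Icc_subset_Icc_right (Nat.div_le_div_left hqp hq))

variable {a : ℕ → E} {c u : ℕ → 𝕜} {C δ : ℝ} {P : Finset ℕ} {N : ℕ}

lemma norm_bilinearSum_sq_le {κ : ℝ} {D : ℕ} (ha : ∀ n, ‖a n‖ ≤ C) (hc : ∀ n, ‖c n‖ ≤ 1)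
    (hu : ∀ n, ‖u n‖ ≤ 1) (hκ : 0 ≤ κ) (hD : 0 < D) (hP : ∀ p ∈ P, D ≤ p)
    (hcorr : PairCorrelationsLE 𝕜 a κ N P) :
    ‖bilinearSum c u a P N‖ ^ 2 ≤ (N / D : ℕ) ^ 2 * (κ * #P ^ 2 + C ^ 2 * #P) := by
  have hdiv : ∀ p ∈ P, N / p ≤ N / D := fun p hp => Nat.div_le_div_left (hP p hp) hD
  have hpair : ∀ p ∈ P, ∀ q ∈ P,
      ‖∑ m ∈ Icc 1 (N / p) ∩ Icc 1 (N / q), inner 𝕜 (a (p * m)) (a (q * m))‖ ≤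
        κ * (N / D : ℕ) + if p = q then C ^ 2 * (N / D : ℕ) else 0 := by
    intro p hp q hq
    rw [Icc_div_inter_Icc_div (hD.trans_le (hP p hp)) (hD.trans_le (hP q hq))]
    have hmax : N / max p q ≤ N / D := Nat.div_le_div_left ((hP p hp).trans (le_max_left p q)) hD
    obtain rfl | hpq := eq_or_ne p q
    · rw [if_pos rfl]
      refine le_add_of_nonneg_of_le (by positivity) ?_
      calc ‖∑ m ∈ Icc 1 (N / max p p), inner 𝕜 (a (p * m)) (a (p * m))‖
          ≤ ∑ m ∈ Icc 1 (N / max p p), C ^ 2 := norm_sum_le_of_le _ fun m _ => by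
            rw [inner_self_eq_norm_sq_to_K, norm_pow, RCLike.norm_ofReal, abs_norm]
            gcongr
            exact ha _
        _ = C ^ 2 * (N / max p p : ℕ) := by simp [mul_comm]
        _ ≤ C ^ 2 * (N / D : ℕ) := by gcongr
    · rw [if_neg hpq, add_zero]
      exact (hcorr hp hq hpq).trans (by gcongr)
  calc ‖bilinearSum c u a P N‖ ^ 2
      ≤ #(Icc 1 (N / D)) * ∑ p ∈ P, ∑ q ∈ P,
          ‖∑ m ∈ Icc 1 (N / p) ∩ Icc 1 (N / q), inner 𝕜 (a (p * m)) (a (q * m))‖ :=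
        norm_sum_sum_smul_sq_le (fun p hp => Icc_subset_Icc_right (hdiv p hp))
          (fun p m => a (p * m)) hc hu
    _ ≤ #(Icc 1 (N / D)) * ∑ p ∈ P, ∑ q ∈ P,
          (κ * (N / D : ℕ) + if p = q then C ^ 2 * (N / D : ℕ) else 0) := by
        gcongr with p hp q hq
        exact hpair p hp q hq
    _ = (N / D : ℕ) ^ 2 * (κ * #P ^ 2 + C ^ 2 * #P) := by
        simp only [sum_add_distrib, sum_const, sum_ite_eq, sum_ite_mem, inter_self, Nat.card_Icc,
          add_tsub_cancel_right, nsmul_eq_mul]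
        ring

lemma card_le_mul_recipSum {M : ℕ} (hP : ∀ p ∈ P, p ∈ Set.Ioc 0 M) : #P ≤ M * recipSum P := by
  rw [card_eq_sum_ones, Nat.cast_sum, recipSum, mul_sum]
  refine sum_le_sum fun p hp => ?_
  rw [Nat.cast_one, ← div_eq_mul_inv, one_le_div (Nat.cast_pos.2 (hP p hp).1), Nat.cast_le]
  exact (hP p hp).2

lemma norm_bilinearSum_le_of_mem_Ico {D : ℕ} (ha : ∀ n, ‖a n‖ ≤ C) (hc : ∀ n, ‖c n‖ ≤ 1)
    (hu : ∀ n, ‖u n‖ ≤ 1) (hδ : 0 < δ) (hD : 0 < D) (hP : ∀ p ∈ P, p ∈ Set.Ico D (2 * D))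
    (hcorr : PairCorrelationsLE 𝕜 a (δ ^ 2) N P) :
    ‖bilinearSum c u a P N‖ ≤ N * (2 * δ * recipSum P + C ^ 2 / (2 * δ) * (D : ℝ)⁻¹) := by
  have hsq := norm_bilinearSum_sq_le ha hc hu (sq_nonneg δ) hD (fun p hp => (hP p hp).1) hcorr
  have hcomplete : δ ^ 2 * (#P : ℝ) ^ 2 + C ^ 2 * #P ≤ (δ * #P + C ^ 2 / (2 * δ)) ^ 2 := by
    have hcross : 2 * (δ * #P) * (C ^ 2 / (2 * δ)) = C ^ 2 * #P := by field_simp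
    rw [add_sq, hcross, mul_pow]
    exact le_add_of_nonneg_right (sq_nonneg _)
  calc ‖bilinearSum c u a P N‖
      ≤ (N / D : ℕ) * (δ * #P + C ^ 2 / (2 * δ)) := by
        refine le_of_sq_le_sq (hsq.trans ?_) (by positivity)
        rw [mul_pow]
        gcongr
    _ ≤ N / D * (δ * ((2 * D : ℕ) * recipSum P) + C ^ 2 / (2 * δ)) := by
        gcongr
        · exact Nat.cast_div_le
        · exact card_le_mul_recipSum fun p hp => ⟨hD.trans_le (hP p hp).1, (hP p hp).2.le⟩
    _ = N * (2 * δ * recipSum P + C ^ 2 / (2 * δ) * (D : ℝ)⁻¹) := by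
        push_cast
        field_simp

lemma norm_bilinearSum_le (ha : ∀ n, ‖a n‖ ≤ C) (hc : ∀ n, ‖c n‖ ≤ 1) (hu : ∀ n, ‖u n‖ ≤ 1)
    (hδ : 0 < δ) (hP : ∀ p ∈ P, p ≠ 0) (hcorr : PairCorrelationsLE 𝕜 a (δ ^ 2) N P) :
    ‖bilinearSum c u a P N‖ ≤ N * (2 * δ * recipSum P + C ^ 2 / δ) := by
  let block (j : ℕ) : Finset ℕ := {p ∈ P | Nat.log 2 p = j}
  have hblock : ∀ j, ∀ p ∈ block j, p ∈ Set.Ico (2 ^ j) (2 * 2 ^ j) := by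
    intro j p hp
    obtain ⟨hpP, rfl⟩ := mem_filter.1 hp
    exact ⟨Nat.pow_log_le_self 2 (hP p hpP),
      pow_succ' 2 (Nat.log 2 p) ▸ Nat.lt_pow_succ_log_self one_lt_two p⟩
  have hmaps : ∀ p ∈ P, Nat.log 2 p ∈ P.image (Nat.log 2) := fun p => mem_image_of_mem _
  have hgeom : ∑ j ∈ P.image (Nat.log 2), ((2 : ℝ) ^ j)⁻¹ ≤ 2 := by
    simp_rw [← one_div, ← one_div_pow]
    exact (summable_geometric_two.sum_le_tsum _ fun _ _ => by positivity).trans_eq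
      tsum_geometric_two
  calc ‖bilinearSum c u a P N‖
      = ‖∑ j ∈ P.image (Nat.log 2), bilinearSum c u a (block j) N‖ := by
        rw [bilinearSum, ← sum_fiberwise_of_maps_to hmaps]
        rfl
    _ ≤ ∑ j ∈ P.image (Nat.log 2),
          N * (2 * δ * recipSum (block j) + C ^ 2 / (2 * δ) * ((2 : ℝ) ^ j)⁻¹) := by
        refine norm_sum_le_of_le _ fun j _ => ?_
        exact_mod_cast norm_bilinearSum_le_of_mem_Ico ha hc hu hδ (Nat.two_pow_pos j) (hblock j)
          (hcorr.mono (coe_subset.2 (filter_subset _ _)))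
    _ = N * (2 * δ * recipSum P +
          C ^ 2 / (2 * δ) * ∑ j ∈ P.image (Nat.log 2), ((2 : ℝ) ^ j)⁻¹) := by
        simp only [← mul_sum, sum_add_distrib, recipSum, block, sum_fiberwise_of_maps_to hmaps]
    _ ≤ N * (2 * δ * recipSum P + C ^ 2 / (2 * δ) * 2) := by gcongr
    _ = N * (2 * δ * recipSum P + C ^ 2 / δ) := by
        congr 2
        field_simp

theorem recipSum_mul_norm_sum_smul_le (ha : ∀ n, ‖a n‖ ≤ C) (hu : ∀ n, ‖u n‖ ≤ 1)
    (hP : ∀ p ∈ P, p.Prime) (hmul : ∀ p ∈ P, ∀ m, ¬ p ∣ m → u (p * m) = u p * u m)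
    (hδ : 0 < δ) (hcorr : PairCorrelationsLE 𝕜 a (δ ^ 2) N P) :
    recipSum P * ‖∑ n ∈ Icc 1 N, u n • a n‖ ≤
      C * √(N * ((N + 2 * #P) * recipSum P)) + 2 * C * N * ∑ p ∈ P, ((p : ℝ)⁻¹) ^ 2 +
        N * (2 * δ * recipSum P + C ^ 2 / δ) := by
  have hua : ∀ n, ‖u n • a n‖ ≤ C := fun n => by
    rw [norm_smul]
    exact (mul_le_of_le_one_left (norm_nonneg _) (hu n)).trans (ha n)
  have hcoprime : (P : Set ℕ).Pairwise Nat.Coprime := fun p hp q hq hpq =>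
    (Nat.coprime_primes (hP p hp) (hP q hq)).2 hpq
  set dilates := ∑ p ∈ P, ∑ m ∈ Icc 1 (N / p), u (p * m) • a (p * m)
  calc recipSum P * ‖∑ n ∈ Icc 1 N, u n • a n‖
      = ‖((recipSum P : 𝕜) • ∑ n ∈ Icc 1 N, u n • a n - dilates) +
          (dilates - bilinearSum u u a P N) + bilinearSum u u a P N‖ := by
        rw [sub_add_sub_cancel, sub_add_cancel, norm_smul, RCLike.norm_ofReal,
          abs_of_nonneg (recipSum_nonneg P)]
    _ ≤ _ := norm_add₃_le.trans <| add_le_add_three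
        (norm_recipSum_smul_sum_sub_sum_dilates_le hua hcoprime N)
        (norm_sum_dilates_sub_bilinearSum_le ha hu hmul N)
        (norm_bilinearSum_le ha hu hu hδ (fun p hp => (hP p hp).ne_zero) hcorr)

lemma norm_sum_smul_le_of_pairCorrelationsLE (ha : ∀ n, ‖a n‖ ≤ C) (hu : ∀ n, ‖u n‖ ≤ 1)
    (hP : ∀ p ∈ P, p.Prime) (hmul : ∀ p ∈ P, ∀ m, ¬ p ∣ m → u (p * m) = u p * u m)
    (hδ : 0 < δ) (hδP : ∀ p ∈ P, (p : ℝ)⁻¹ ≤ δ) (hL : 1 / δ ^ 2 ≤ recipSum P)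
    (hN : 2 * #P ≤ N) (hcorr : PairCorrelationsLE 𝕜 a (δ ^ 2) N P) :
    ‖∑ n ∈ Icc 1 N, u n • a n‖ ≤ N * (δ * (C ^ 2 + 4 * C + 2)) := by
  have hC : 0 ≤ C := (norm_nonneg _).trans (ha 0)
  have hpos : 0 < recipSum P := lt_of_lt_of_le (by positivity) hL
  have hone : 1 ≤ δ ^ 2 * recipSum P := (div_le_iff₀' (by positivity)).1 hL
  have hinv : C ^ 2 / δ ≤ C ^ 2 * δ * recipSum P := by
    rw [div_le_iff₀ hδ]
    linarith [mul_le_mul_of_nonneg_left hone (sq_nonneg C)]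
  have hsquares : ∑ p ∈ P, ((p : ℝ)⁻¹) ^ 2 ≤ δ * recipSum P := by
    rw [recipSum, mul_sum]
    refine sum_le_sum fun p hp => ?_
    rw [sq]
    exact mul_le_mul_of_nonneg_right (hδP p hp) (by positivity)
  have hsqrt : √(N * ((N + 2 * #P) * recipSum P)) ≤ 2 * N * δ * recipSum P := by
    refine Real.sqrt_le_iff.2 ⟨by positivity, ?_⟩
    have hN' : (2 * #P : ℝ) ≤ N := by exact_mod_cast hN
    calc (N * ((N + 2 * #P) * recipSum P) : ℝ)
        ≤ N * ((N + N) * (recipSum P * (2 * (δ ^ 2 * recipSum P)))) := by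
          gcongr
          exact le_mul_of_one_le_right hpos.le (by linarith)
      _ = (2 * N * δ * recipSum P) ^ 2 := by ring
  refine le_of_mul_le_mul_left ?_ hpos
  calc recipSum P * ‖∑ n ∈ Icc 1 N, u n • a n‖
      ≤ C * √(N * ((N + 2 * #P) * recipSum P)) + 2 * C * N * ∑ p ∈ P, ((p : ℝ)⁻¹) ^ 2 +
          N * (2 * δ * recipSum P + C ^ 2 / δ) :=
        recipSum_mul_norm_sum_smul_le ha hu hP hmul hδ hcorr
    _ ≤ C * (2 * N * δ * recipSum P) + 2 * C * N * (δ * recipSum P) +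
          N * (2 * δ * recipSum P + C ^ 2 * δ * recipSum P) := by gcongr
    _ = recipSum P * (N * (δ * (C ^ 2 + 4 * C + 2))) := by ring

lemma eventually_norm_sum_le_of_limsup_lt {F : Type*} [SeminormedAddCommGroup F] [NormedSpace 𝕜 F]
    {b : ℕ → F} {B κ : ℝ} (hb : ∀ n, ‖b n‖ ≤ B)
    (hlim : limsup (fun N : ℕ => ‖(N : 𝕜)⁻¹ • ∑ n ∈ Icc 1 N, b n‖) atTop < κ) :
    ∀ᶠ N : ℕ in atTop, ‖∑ n ∈ Icc 1 N, b n‖ ≤ κ * N := by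
  have hnorm : ∀ N : ℕ,
      ‖(N : 𝕜)⁻¹ • ∑ n ∈ Icc 1 N, b n‖ = (N : ℝ)⁻¹ * ‖∑ n ∈ Icc 1 N, b n‖ := fun N => by
    rw [norm_smul, norm_inv, RCLike.norm_natCast]
  simp_rw [hnorm] at hlim
  have hbdd : IsBoundedUnder (· ≤ ·) atTop
      fun N : ℕ => (N : ℝ)⁻¹ * ‖∑ n ∈ Icc 1 N, b n‖ := by
    refine isBoundedUnder_of_eventually_le (a := B) ?_
    filter_upwards [eventually_gt_atTop 0] with N hN
    rw [inv_mul_le_iff₀ (Nat.cast_pos.2 hN)]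
    exact (norm_sum_le_of_le _ fun n _ => hb n).trans_eq (by simp)
  filter_upwards [eventually_lt_of_limsup_lt hlim hbdd, eventually_gt_atTop 0] with N hlt hN
  rw [inv_mul_lt_iff₀ (Nat.cast_pos.2 hN)] at hlt
  exact hlt.le.trans_eq (mul_comm _ _)

lemma eventually_pairCorrelationsLE {κ : ℝ} (ha : ∀ n, ‖a n‖ ≤ C) (hP : ∀ p ∈ P, p ≠ 0)
    (hlim : (P : Set ℕ).Pairwise fun p q => limsup (fun N : ℕ =>
      ‖(N : 𝕜)⁻¹ * ∑ n ∈ Icc 1 N, inner 𝕜 (a (p * n)) (a (q * n))‖) atTop < κ) :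
    ∀ᶠ N : ℕ in atTop, PairCorrelationsLE 𝕜 a κ N P := by
  have hC : 0 ≤ C := (norm_nonneg _).trans (ha 0)
  refine (eventually_all_finset P).2 fun p hp => (eventually_all_finset P).2 fun q hq =>
    eventually_imp_distrib_left.2 fun hpq => ?_
  have hbound : ∀ n, ‖inner 𝕜 (a (p * n)) (a (q * n))‖ ≤ C * C := fun n =>
    (norm_inner_le_norm _ _).trans (mul_le_mul (ha _) (ha _) (norm_nonneg _) hC)
  have hmax : max p q ≠ 0 := ((hP p hp).bot_lt.trans_le (le_max_left p q)).ne'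
  exact (Nat.tendsto_div_const_atTop hmax).eventually
    (eventually_norm_sum_le_of_limsup_lt (𝕜 := 𝕜) hbound (hlim hp hq hpq))

theorem bourgain_sarnak_ziegler_criterion_general {S : Set ℕ} (hS : ∀ p ∈ S, p.Prime)
    (hS_div : ¬ Summable (S.indicator fun n : ℕ => (1 : ℝ) / n)) (ha : ∀ n, ‖a n‖ ≤ C)
    (h : ∀ ε > (0 : ℝ), ∃ K : ℕ, ∀ r ∈ S, ∀ s ∈ S, r ≠ s → K ≤ r → K ≤ s →
      limsup (fun N : ℕ => ‖(N : 𝕜)⁻¹ * ∑ n ∈ Icc 1 N, inner 𝕜 (a (r * n)) (a (s * n))‖) atTop ≤ ε)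
    (hu_mul : ∀ p ∈ S, ∀ m, ¬ p ∣ m → u (p * m) = u p * u m) (hu : ∀ n, ‖u n‖ ≤ 1) :
    Tendsto (fun N : ℕ => (N : 𝕜)⁻¹ • ∑ n ∈ Icc 1 N, u n • a n) atTop (nhds 0) := by
  refine Metric.tendsto_nhds.2 fun η hη => ?_
  obtain ⟨δ, hδ, hδη⟩ : ∃ δ > 0, δ * (C ^ 2 + 4 * C + 2) < η :=
    exists_pos_mul_lt hη _ |>.imp fun δ hδ => ⟨hδ.1, mul_comm δ _ ▸ hδ.2⟩
  obtain ⟨K, hK⟩ := h (δ ^ 2 / 2) (by positivity)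
  obtain ⟨P, hPS, hL⟩ := exists_finset_le_recipSum hS_div (max K ⌈δ⁻¹⌉₊) (1 / δ ^ 2)
  have hP : ∀ p ∈ P, p.Prime := fun p hp => hS p (hPS p hp).1
  have hKP : ∀ p ∈ P, K ≤ p := fun p hp => (le_max_left _ _).trans (hPS p hp).2
  have hδP : ∀ p ∈ P, (p : ℝ)⁻¹ ≤ δ := fun p hp =>
    inv_le_of_inv_le₀ hδ (Nat.ceil_le.1 ((le_max_right _ _).trans (hPS p hp).2))
  have hcorr : ∀ᶠ N : ℕ in atTop, PairCorrelationsLE 𝕜 a (δ ^ 2) N P :=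
    eventually_pairCorrelationsLE ha (fun p hp => (hP p hp).ne_zero) fun p hp q hq hpq =>
      (hK p (hPS p hp).1 q (hPS q hq).1 hpq (hKP p hp) (hKP q hq)).trans_lt
        (half_lt_self (by positivity))
  filter_upwards [hcorr, eventually_ge_atTop (2 * #P), eventually_gt_atTop 0] with N hN hPN hN0
  have hsum := norm_sum_smul_le_of_pairCorrelationsLE ha hu hP
    (fun p hp => hu_mul p (hPS p hp).1) hδ hδP hL hPN hN
  rw [dist_zero_right, norm_smul, norm_inv, RCLike.norm_natCast,
    inv_mul_lt_iff₀ (Nat.cast_pos.2 hN0)]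
  exact hsum.trans_lt (by gcongr)

end

/-- **The Bourgain–Sarnak–Ziegler criterion** (Proposition 2.1). If `(a_n)` is a bounded
sequence of complex numbers such that for every `ε > 0` there exists `K` with
`limsup_N |(1/N) ∑_{n ≤ N} a_{rn} conj(a_{sn})| ≤ ε` for all distinct primes `r, s ≥ K`,
then `(1/N) ∑_{n ≤ N} a_n u(n) → 0` for every multiplicative `u : ℕ → ℂ`, `|u| ≤ 1`. -/
theorem bourgain_sarnak_ziegler_criterion
    (a : ℕ → ℂ) (C : ℝ) (ha_bd : ∀ n, ‖a n‖ ≤ C)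
    (h : ∀ ε > (0:ℝ), ∃ K : ℕ, ∀ r s : ℕ, r.Prime → s.Prime → r ≠ s → K ≤ r → K ≤ s →
      Filter.limsup (fun N : ℕ =>
        ‖(N : ℂ)⁻¹ * ∑ n ∈ Finset.Icc 1 N, a (r * n) * (starRingEnd ℂ) (a (s * n))‖)
        atTop ≤ ε)
    (u : ℕ → ℂ) (hu_mult : ∀ m n : ℕ, Nat.Coprime m n → u (m * n) = u m * u n)
    (hu_bd : ∀ n, ‖u n‖ ≤ 1) :
    Tendsto (fun N : ℕ => (N : ℂ)⁻¹ * ∑ n ∈ Finset.Icc 1 N, a n * u n) atTop (nhds 0) := by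
  simpa only [smul_eq_mul, mul_comm (u _)] using
    bourgain_sarnak_ziegler_criterion_general (fun _ hp => hp) not_summable_one_div_on_primes ha_bd
      (fun ε hε => (h ε hε).imp fun K hK r hr s hs hrs hr' hs' => by
        simpa only [RCLike.inner_apply] using hK s r hs hr hrs.symm hs' hr')
      (fun p hp m hpm => hu_mult p m ((Nat.Prime.coprime_iff_not_dvd hp).2 hpm)) hu_bd
end

section
/- Let T be a totally ergodic automorphism of a standard Borel probability space (X,μ) with discrete spectrum, i.e., the linear span of the eigenfunctions of T is dense in L²(X,μ). Then T has the AOP property. -/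
open MeasureTheory Filter

/-- `T` is totally ergodic: every nonzero power of `T` is ergodic. -/
def TotallyErgodic {X : Type*} [MeasurableSpace X] (T : X → X) (μ : Measure X) : Prop :=
  ∀ m : ℕ, m ≠ 0 → Ergodic (T^[m]) μ

/-- `(X,μ,T)` has asymptotically orthogonal powers (AOP). -/
def AOP {X : Type*} [MeasurableSpace X] (T : X → X) (μ : Measure X) : Prop :=
  ∀ f g : X → ℂ, MemLp f 2 μ → MemLp g 2 μ →
    (∫ x, f x ∂μ) = 0 → (∫ x, g x ∂μ) = 0 →
    ∀ ε > (0:ℝ), ∃ N : ℕ, ∀ r s : ℕ, r.Prime → s.Prime → r ≠ s → N ≤ r → N ≤ s →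
      ∀ κ : Measure (X × X), IsProbabilityMeasure κ →
        κ.map Prod.fst = μ → κ.map Prod.snd = μ →
        Ergodic (Prod.map (T^[r]) (T^[s])) κ →
        ‖∫ p, f p.1 * (starRingEnd ℂ) (g p.2) ∂κ‖ ≤ ε

/-- `(X,μ,T)` has discrete spectrum: the linear span of the eigenfunctions of `T`
(nonzero `g ∈ L²(μ)` with `g ∘ T = c · g` a.e. for some `c ∈ ℂ`) is dense in `L²(X,μ)`. -/
def DiscreteSpectrum {X : Type*} [MeasurableSpace X] (T : X → X) (μ : Measure X) : Prop :=
  Dense ((Submodule.span ℂ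
      {g : Lp ℂ 2 μ | g ≠ 0 ∧ ∃ c : ℂ,
        (fun x => (g : X → ℂ) (T x)) =ᵐ[μ] (fun x => c * (g : X → ℂ) x)} :
          Submodule ℂ (Lp ℂ 2 μ)) : Set (Lp ℂ 2 μ))

/-!
A joining `κ` of `T^r` and `T^s` pairs an eigenfunction `u` with eigenvalue `c` and an eigenfunction
`v` with eigenvalue `d` to `⟪v ∘ snd, u ∘ fst⟫` in `L²(κ)`. Both pullbacks are eigenfunctions of
`T^r × T^s`, with eigenvalues `c ^ r` and `d ^ s`, so they are orthogonal unless `c ^ r = d ^ s`. By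
total ergodicity `c` is not a root of unity when `u` is not constant, and then `c ^ r = d ^ s` holds
for at most one coprime pair `(r, s)`. If `u` is constant, it is removed by projecting `L²(μ)` onto
the functions with integral zero. Since the pairings are uniformly bounded and eigenfunctions span a
dense subspace, asymptotic orthogonality passes to all functions with integral zero.
-/

open scoped InnerProductSpace ComplexConjugate Topology InnerProduct

section Powers

variable {M : Type*} [Monoid M] {c d : M}

theorem eq_of_pow_eq_pow_of_coprime (hc : (fun n : ℕ => c ^ n).Injective) {r s r' s' : ℕ}
    (hrs : r.Coprime s) (hrs' : r'.Coprime s') (h : c ^ r = d ^ s) (h' : c ^ r' = d ^ s') :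
    r = r' := by
  have hmul : r * s' = r' * s := hc <| calc
    c ^ (r * s') = d ^ (s * s') := by rw [pow_mul, h, pow_mul]
    _ = d ^ (s' * s) := by rw [mul_comm]
    _ = c ^ (r' * s) := by rw [pow_mul, ← h', pow_mul]
  exact Nat.dvd_antisymm (hrs.dvd_of_dvd_mul_right ⟨s', hmul.symm⟩)
    (hrs'.dvd_of_dvd_mul_right ⟨s, hmul⟩)

theorem eventually_pow_ne_pow_of_coprime (hc : (fun n : ℕ => c ^ n).Injective) (d : M) :
    ∀ᶠ r in atTop, ∀ s : ℕ, r.Coprime s → c ^ r ≠ d ^ s := by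
  by_cases! H : ∃ r s : ℕ, r.Coprime s ∧ c ^ r = d ^ s
  · obtain ⟨r₀, s₀, hrs₀, h₀⟩ := H
    filter_upwards [eventually_ne_atTop r₀] with r hr s hrs h
    exact hr (eq_of_pow_eq_pow_of_coprime hc hrs hrs₀ h h₀)
  · exact .of_forall H

end Powers

section DenseSpan

variable {ι 𝕜 𝕜₂ E F : Type*} {l : Filter ι}

theorem tendsto_zero_of_dense_span [NontriviallyNormedField 𝕜] [NontriviallyNormedField 𝕜₂]
    {σ : 𝕜 →+* 𝕜₂} [RingHomIsometric σ] [SeminormedAddCommGroup E] [SeminormedAddCommGroup F]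
    [NormedSpace 𝕜 E] [NormedSpace 𝕜₂ F] {L : ι → E →SL[σ] F} {C : ℝ} {S : Set E}
    (hL : ∀ i x, ‖L i x‖ ≤ C * ‖x‖) (hS : Dense (Submodule.span 𝕜 S : Set E))
    (h : ∀ x ∈ S, Tendsto (L · x) l (𝓝 0)) (x : E) : Tendsto (L · x) l (𝓝 0) := by
  have hbounded : ∃ C : ℝ, ∀ i x, ‖L i x‖ ≤ C * ‖x‖ := ⟨C, hL⟩
  have hequi : Equicontinuous fun i => ⇑(L i) :=
    ((NormedSpace.equicontinuous_TFAE L).out 3 1).1 hbounded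
  refine hS.induction (fun y hy => ?_) (hequi.isClosed_setOfPred_tendsto continuous_const) x
  induction hy using Submodule.span_induction with
  | mem y hy => exact h y hy
  | zero => simpa using tendsto_const_nhds
  | add y z _ _ hy hz => simpa using hy.add hz
  | smul a y _ hy => simpa using hy.const_smul (σ a)

theorem tendsto_inner_apply_zero_of_dense_span [RCLike 𝕜] [SeminormedAddCommGroup E]
    [NormedSpace 𝕜 E] [SeminormedAddCommGroup F] [InnerProductSpace 𝕜 F]
    {A : ι → E →L[𝕜] F} {C : ℝ} {S : Set E} {S' : Set F} (hA : ∀ i x, ‖A i x‖ ≤ C * ‖x‖)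
    (hS : Dense (Submodule.span 𝕜 S : Set E)) (hS' : Dense (Submodule.span 𝕜 S' : Set F))
    (h : ∀ x ∈ S, ∀ y ∈ S', Tendsto (fun i => ⟪y, A i x⟫_𝕜) l (𝓝 0)) (x : E) (y : F) :
    Tendsto (fun i => ⟪y, A i x⟫_𝕜) l (𝓝 0) := by
  have hbound (i : ι) (x : E) (y : F) : ‖⟪y, A i x⟫_𝕜‖ ≤ C * ‖x‖ * ‖y‖ := calc
    ‖⟪y, A i x⟫_𝕜‖ ≤ ‖y‖ * ‖A i x‖ := norm_inner_le_norm _ _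
    _ ≤ ‖y‖ * (C * ‖x‖) := by gcongr; exact hA i x
    _ = C * ‖x‖ * ‖y‖ := by ring
  refine tendsto_zero_of_dense_span (L := fun i => innerSL 𝕜 y ∘L A i) (C := C * ‖y‖)
    (fun i x => (hbound i x y).trans_eq (by ring)) hS (fun x hx => ?_) x
  exact tendsto_zero_of_dense_span (L := fun i => innerSLFlip 𝕜 (A i x)) (hbound · x) hS' (h x hx) y

end DenseSpan

section Isometry

variable {𝕜 E : Type*} [RCLike 𝕜] [NormedAddCommGroup E] {a b : 𝕜} {x y : E}

theorem norm_eq_one_of_linearIsometry_apply_eq_smul [NormedSpace 𝕜 E] (W : E →ₗᵢ[𝕜] E)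
    (hx : W x = a • x) (hx0 : x ≠ 0) : ‖a‖ = 1 := by
  have h : ‖a‖ * ‖x‖ = ‖x‖ := by rw [← norm_smul, ← hx, W.norm_map]
  exact (mul_eq_right₀ (norm_ne_zero_iff.2 hx0)).1 h

theorem inner_eq_zero_of_linearIsometry_apply_eq_smul [InnerProductSpace 𝕜 E] (W : E →ₗᵢ[𝕜] E)
    (hx : W x = a • x) (hy : W y = b • y) (hab : a ≠ b) : ⟪x, y⟫_𝕜 = 0 := by
  rcases eq_or_ne x 0 with rfl | hx0
  · exact inner_zero_left y
  have ha : ‖a‖ = 1 := norm_eq_one_of_linearIsometry_apply_eq_smul W hx hx0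
  have ha0 : a ≠ 0 := norm_ne_zero_iff.1 (by simp [ha])
  have h : a⁻¹ * b * ⟪x, y⟫_𝕜 = ⟪x, y⟫_𝕜 := by
    rw [RCLike.inv_eq_conj ha, mul_assoc, ← inner_smul_right, ← inner_smul_left, ← hx, ← hy,
      W.inner_map_map]
  by_contra hne
  exact hab ((inv_mul_eq_one₀ ha0).1 ((mul_eq_right₀ hne).1 h))

end Isometry

section Koopman

variable {X Y Z : Type*} [MeasurableSpace X] [MeasurableSpace Y] [MeasurableSpace Z]
  {μ : Measure X} {ν : Measure Y} {κ : Measure Z} (𝕜 : Type*) [RCLike 𝕜]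

/-- The Koopman operator `u ↦ u ∘ T` of a measure preserving map `T`, as an isometry of `L²` spaces.
It is used both for transformations of one space and for the pullback along a factor map. -/
noncomputable abbrev koopman {T : X → Y} (hT : MeasurePreserving T μ ν) :
    Lp 𝕜 2 ν →ₗᵢ[𝕜] Lp 𝕜 2 μ :=
  Lp.compMeasurePreservingₗᵢ 𝕜 T hT

variable {𝕜}

theorem koopman_eq_smul_iff {T : X → X} (hT : MeasurePreserving T μ μ) {u : Lp 𝕜 2 μ} {c : 𝕜} :
    koopman 𝕜 hT u = c • u ↔ (fun x => u (T x)) =ᵐ[μ] fun x => c * u x := by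
  rw [Lp.ext_iff]
  have hTu : koopman 𝕜 hT u =ᵐ[μ] u ∘ T := Lp.coeFn_compMeasurePreserving u hT
  have hcu : (c • u : Lp 𝕜 2 μ) =ᵐ[μ] fun x => c * u x := Lp.coeFn_smul c u
  exact ⟨fun h => hTu.symm.trans (h.trans hcu), fun h => hTu.trans (h.trans hcu.symm)⟩

theorem koopman_iterate_eq_pow_smul {T : X → X} (hT : MeasurePreserving T μ μ) {u : Lp 𝕜 2 μ}
    {c : 𝕜} (hu : koopman 𝕜 hT u = c • u) (n : ℕ) : koopman 𝕜 (hT.iterate n) u = c ^ n • u := by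
  induction n with
  | zero =>
    rw [pow_zero, one_smul]
    exact Lp.compMeasurePreserving_id_apply u
  | succ n ih => calc
    koopman 𝕜 (hT.iterate (n + 1)) u = koopman 𝕜 hT (koopman 𝕜 (hT.iterate n) u) :=
      Lp.compMeasurePreserving_comp_apply u (hT.iterate n) hT
    _ = c ^ (n + 1) • u := by rw [ih, map_smul, hu, smul_smul, pow_succ]

theorem koopman_factor_eq_smul {π : Z → X} {W : Z → Z} {T : X → X}
    (hπ : MeasurePreserving π κ μ) (hW : MeasurePreserving W κ κ) (hT : MeasurePreserving T μ μ)
    (hπW : Function.Semiconj π W T) {u : Lp 𝕜 2 μ} {c : 𝕜} (hu : koopman 𝕜 hT u = c • u) :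
    koopman 𝕜 hW (koopman 𝕜 hπ u) = c • koopman 𝕜 hπ u := calc
  koopman 𝕜 hW (koopman 𝕜 hπ u) = koopman 𝕜 (hπ.comp hW) u :=
    (Lp.compMeasurePreserving_comp_apply u hπ hW).symm
  _ = koopman 𝕜 (hT.comp hπ) u := by simp only [hπW.comp_eq]
  _ = koopman 𝕜 hπ (koopman 𝕜 hT u) := Lp.compMeasurePreserving_comp_apply u hT hπ
  _ = c • koopman 𝕜 hπ u := by rw [hu, map_smul]

variable (𝕜) in
/-- The operator `Φ : L²(μ) → L²(ν)` with `⟪g, Φ f⟫ = ∫ f(π z) conj(g(ρ z)) dκ(z)` attached to two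
factor maps `π`, `ρ` of the same space. It turns the correlations with respect to a joining
into matrix coefficients of a contraction. -/
noncomputable def correlationOperator {π : Z → X} {ρ : Z → Y} (hπ : MeasurePreserving π κ μ)
    (hρ : MeasurePreserving ρ κ ν) : Lp 𝕜 2 μ →L[𝕜] Lp 𝕜 2 ν :=
  (koopman 𝕜 hρ).toContinuousLinearMap† ∘L (koopman 𝕜 hπ).toContinuousLinearMap

section CorrelationOperator

variable {π : Z → X} {ρ : Z → Y} (hπ : MeasurePreserving π κ μ) (hρ : MeasurePreserving ρ κ ν)

theorem inner_correlationOperator (f : Lp 𝕜 2 μ) (g : Lp 𝕜 2 ν) :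
    ⟪g, correlationOperator 𝕜 hπ hρ f⟫_𝕜 = ⟪koopman 𝕜 hρ g, koopman 𝕜 hπ f⟫_𝕜 :=
  ContinuousLinearMap.adjoint_inner_right (koopman 𝕜 hρ).toContinuousLinearMap g (koopman 𝕜 hπ f)

theorem inner_correlationOperator_toLp {f : X → 𝕜} {g : Y → 𝕜} (hf : MemLp f 2 μ)
    (hg : MemLp g 2 ν) :
    ⟪hg.toLp g, correlationOperator 𝕜 hπ hρ (hf.toLp f)⟫_𝕜 =
      ∫ z, f (π z) * conj (g (ρ z)) ∂κ := by
  rw [inner_correlationOperator, L2.inner_def]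
  refine integral_congr_ae ?_
  filter_upwards [(hf.comp_measurePreserving hπ).coeFn_toLp,
    (hg.comp_measurePreserving hρ).coeFn_toLp] with z hfz hgz
  exact congrArg₂ (fun a b => a * conj b) hfz hgz

theorem norm_correlationOperator_apply_le (f : Lp 𝕜 2 μ) :
    ‖correlationOperator 𝕜 hπ hρ f‖ ≤ ‖f‖ := calc
  ‖correlationOperator 𝕜 hπ hρ f‖ ≤
      ‖(koopman 𝕜 hρ).toContinuousLinearMap†‖ * ‖koopman 𝕜 hπ f‖ :=
    ((koopman 𝕜 hρ).toContinuousLinearMap†).le_opNorm (koopman 𝕜 hπ f)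
  _ ≤ 1 * ‖f‖ := by
    rw [LinearIsometryEquiv.norm_map, LinearIsometry.norm_map]
    gcongr
    exact LinearIsometry.norm_toContinuousLinearMap_le _
  _ = ‖f‖ := one_mul _

theorem inner_correlationOperator_eq_zero {W : Z → Z} {R : X → X} {S : Y → Y}
    (hW : MeasurePreserving W κ κ) (hR : MeasurePreserving R μ μ) (hS : MeasurePreserving S ν ν)
    (hπW : Function.Semiconj π W R) (hρW : Function.Semiconj ρ W S)
    {u : Lp 𝕜 2 μ} {v : Lp 𝕜 2 ν} {a b : 𝕜} (hu : koopman 𝕜 hR u = a • u)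
    (hv : koopman 𝕜 hS v = b • v) (hab : a ≠ b) : ⟪v, correlationOperator 𝕜 hπ hρ u⟫_𝕜 = 0 := by
  rw [inner_correlationOperator]
  exact inner_eq_zero_of_linearIsometry_apply_eq_smul (koopman 𝕜 hW)
    (koopman_factor_eq_smul hρ hW hS hρW hv) (koopman_factor_eq_smul hπ hW hR hπW hu) hab.symm

end CorrelationOperator

theorem TotallyErgodic.measurePreserving {T : X → X} (hT : TotallyErgodic T μ) :
    MeasurePreserving T μ μ :=
  (hT 1 one_ne_zero).toMeasurePreserving

theorem DiscreteSpectrum.dense_span_koopman_eq_smul {T : X → X} (hds : DiscreteSpectrum T μ)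
    (hT : MeasurePreserving T μ μ) :
    Dense (Submodule.span ℂ {u : Lp ℂ 2 μ | ∃ c : ℂ, koopman ℂ hT u = c • u} : Set (Lp ℂ 2 μ)) := by
  refine Dense.mono (Submodule.span_mono ?_) hds
  rintro u ⟨-, c, hu⟩
  exact ⟨c, (koopman_eq_smul_iff hT).2 hu⟩

end Koopman

section Constants

variable {X 𝕜 : Type*} [MeasurableSpace X] [RCLike 𝕜] {μ : Measure X} [IsFiniteMeasure μ]
  {T : X → X}

variable (𝕜 μ) in
/-- The line of constant functions in `L²(μ)`. Its orthogonal complement consists of the functions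
with integral zero. -/
noncomputable def constantFunctions : Submodule 𝕜 (Lp 𝕜 2 μ) :=
  𝕜 ∙ Lp.const 2 μ (1 : 𝕜)

theorem mem_constantFunctions_orthogonal_iff {f : Lp 𝕜 2 μ} :
    f ∈ (constantFunctions 𝕜 μ)ᗮ ↔ ∫ x, f x ∂μ = 0 := by
  rw [constantFunctions, Submodule.mem_orthogonal_singleton_iff_inner_right,
    ← indicatorConstLp_univ, L2.inner_indicatorConstLp_one, setIntegral_univ]

theorem mem_constantFunctions_of_koopman_eq_self (hT : Ergodic T μ) {u : Lp 𝕜 2 μ}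
    (hu : koopman 𝕜 hT.toMeasurePreserving u = u) : u ∈ constantFunctions 𝕜 μ := by
  obtain ⟨a, ha⟩ := hT.eq_const_of_compMeasurePreserving_eq (congrArg Subtype.val hu)
  have hsmul : a • Lp.const 2 μ (1 : 𝕜) = Lp.const 2 μ a := calc
    a • Lp.const 2 μ (1 : 𝕜) = Lp.const 2 μ (a • 1) := ((Lp.constₗ 2 μ 𝕜).map_smul a (1 : 𝕜)).symm
    _ = Lp.const 2 μ a := by rw [smul_eq_mul, mul_one]
  exact Submodule.mem_span_singleton.2 ⟨a, Subtype.ext (by rw [hsmul, ha, Lp.const_val])⟩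

theorem mem_constantFunctions_orthogonal_of_koopman_eq_smul (hT : MeasurePreserving T μ μ)
    {u : Lp 𝕜 2 μ} {c : 𝕜} (hu : koopman 𝕜 hT u = c • u) (hc : c ≠ 1) :
    u ∈ (constantFunctions 𝕜 μ)ᗮ := by
  have hone : koopman 𝕜 hT (Lp.const 2 μ 1) = (1 : 𝕜) • Lp.const 2 μ 1 := (one_smul _ _).symm
  exact Submodule.mem_orthogonal_singleton_iff_inner_right.2 <|
    inner_eq_zero_of_linearIsometry_apply_eq_smul (koopman 𝕜 hT) hone hu hc.symm

theorem TotallyErgodic.injective_pow_of_koopman_eq_smul (hT : TotallyErgodic T μ)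
    {u : Lp 𝕜 2 μ} {c : 𝕜} (hu : koopman 𝕜 hT.measurePreserving u = c • u)
    (hne : u ∉ constantFunctions 𝕜 μ) : (fun n : ℕ => c ^ n).Injective := by
  have hu0 : u ≠ 0 := by rintro rfl; exact hne (zero_mem _)
  have hc0 : c ≠ 0 := norm_ne_zero_iff.1 <| by
    simp [norm_eq_one_of_linearIsometry_apply_eq_smul _ hu hu0]
  refine .of_lt_imp_ne fun m n hmn h => hne ?_
  have hroot : c ^ (n - m) = 1 :=
    (mul_eq_left₀ (pow_ne_zero m hc0)).1 ((pow_mul_pow_sub c hmn.le).trans h.symm)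
  refine mem_constantFunctions_of_koopman_eq_self (hT (n - m) (Nat.sub_ne_zero_of_lt hmn)) ?_
  rw [koopman_iterate_eq_pow_smul hT.measurePreserving hu, hroot, one_smul]

end Constants

/-- `κ` is a joining of the systems `(X, μ, R)` and `(Y, ν, S)`: an invariant measure on the product
with marginals `μ` and `ν`, these being expressed by the projections preserving measure. -/
structure IsJoining {X Y : Type*} [MeasurableSpace X] [MeasurableSpace Y] (R : X → X)
    (μ : Measure X) (S : Y → Y) (ν : Measure Y) (κ : Measure (X × Y)) : Prop where
  fst : MeasurePreserving Prod.fst κ μ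
  snd : MeasurePreserving Prod.snd κ ν
  prodMap : MeasurePreserving (Prod.map R S) κ κ

section Joinings

variable {X : Type*} [MeasurableSpace X] {μ : Measure X} [IsFiniteMeasure μ] {T : X → X}
  {ι : Type*} {l : Filter ι} {r s : ι → ℕ} {κ : ι → Measure (X × X)}

theorem tendsto_inner_correlationOperator_of_koopman_eq_smul {𝕜 : Type*} [RCLike 𝕜]
    (hT : TotallyErgodic T μ) (hr : Tendsto r l atTop) (hrs : ∀ i, (r i).Coprime (s i))
    (hκ : ∀ i, IsJoining T^[r i] μ T^[s i] μ (κ i)) {u v : Lp 𝕜 2 μ} {c d : 𝕜}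
    (hu : koopman 𝕜 hT.measurePreserving u = c • u)
    (hv : koopman 𝕜 hT.measurePreserving v = d • v) :
    Tendsto (fun i => ⟪v, correlationOperator 𝕜 (hκ i).fst (hκ i).snd
      ((constantFunctions 𝕜 μ)ᗮ.starProjection u)⟫_𝕜) l (𝓝 0) := by
  have hTm := hT.measurePreserving
  by_cases hconst : u ∈ constantFunctions 𝕜 μ
  · have hPu : (constantFunctions 𝕜 μ)ᗮ.starProjection u = 0 :=
      (Submodule.starProjection_apply_eq_zero_iff _).2 (Submodule.le_orthogonal_orthogonal _ hconst)
    simpa [hPu] using tendsto_const_nhds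
  have hc : (fun n : ℕ => c ^ n).Injective := hT.injective_pow_of_koopman_eq_smul hu hconst
  have hc1 : c ≠ 1 := by simpa using hc.ne one_ne_zero
  have hPu : (constantFunctions 𝕜 μ)ᗮ.starProjection u = u :=
    Submodule.starProjection_eq_self_iff.2
      (mem_constantFunctions_orthogonal_of_koopman_eq_smul hTm hu hc1)
  refine tendsto_const_nhds.congr' ?_
  filter_upwards [hr.eventually (eventually_pow_ne_pow_of_coprime hc d)] with i hi
  rw [hPu, inner_correlationOperator_eq_zero _ _ (hκ i).prodMap (hTm.iterate _) (hTm.iterate _)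
    (fun _ => rfl) (fun _ => rfl) (koopman_iterate_eq_pow_smul hTm hu _)
    (koopman_iterate_eq_pow_smul hTm hv _) (hi _ (hrs i))]

theorem tendsto_integral_mul_conj_of_isJoining (hT : TotallyErgodic T μ)
    (hds : DiscreteSpectrum T μ) (hr : Tendsto r l atTop) (hrs : ∀ i, (r i).Coprime (s i))
    (hκ : ∀ i, IsJoining T^[r i] μ T^[s i] μ (κ i)) {f g : X → ℂ} (hf : MemLp f 2 μ)
    (hg : MemLp g 2 μ) (hf0 : ∫ x, f x ∂μ = 0) :
    Tendsto (fun i => ∫ p, f p.1 * conj (g p.2) ∂κ i) l (𝓝 0) := by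
  let P := (constantFunctions ℂ μ)ᗮ.starProjection
  let Φ (i : ι) := correlationOperator ℂ (hκ i).fst (hκ i).snd
  have hPf : P (hf.toLp f) = hf.toLp f := by
    rw [Submodule.starProjection_eq_self_iff, mem_constantFunctions_orthogonal_iff,
      integral_congr_ae hf.coeFn_toLp, hf0]
  have hΦP (i : ι) (x : Lp ℂ 2 μ) : ‖(Φ i ∘L P) x‖ ≤ 1 * ‖x‖ := calc
    ‖Φ i (P x)‖ ≤ ‖P x‖ := norm_correlationOperator_apply_le _ _ _
    _ ≤ ‖x‖ := Submodule.norm_starProjection_apply_le _ _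
    _ = 1 * ‖x‖ := (one_mul _).symm
  have hdense := hds.dense_span_koopman_eq_smul hT.measurePreserving
  have hlim := tendsto_inner_apply_zero_of_dense_span hΦP hdense hdense
    (fun u ⟨_, hu⟩ v ⟨_, hv⟩ =>
      tendsto_inner_correlationOperator_of_koopman_eq_smul hT hr hrs hκ hu hv)
    (hf.toLp f) (hg.toLp g)
  simpa only [ContinuousLinearMap.comp_apply, hPf, Φ, inner_correlationOperator_toLp] using hlim

end Joinings

theorem aop_of_discreteSpectrum_general {X : Type*} [MeasurableSpace X] {μ : Measure X}
    [IsFiniteMeasure μ] {T : X → X} (hT : TotallyErgodic T μ) (hds : DiscreteSpectrum T μ)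
    {f g : X → ℂ} (hf : MemLp f 2 μ) (hg : MemLp g 2 μ) (hf0 : ∫ x, f x ∂μ = 0)
    {ε : ℝ} (hε : 0 < ε) :
    ∃ N : ℕ, ∀ r s : ℕ, r.Coprime s → N ≤ r → ∀ κ : Measure (X × X),
      IsJoining T^[r] μ T^[s] μ κ → ‖∫ p, f p.1 * conj (g p.2) ∂κ‖ ≤ ε := by
  by_contra! H
  choose r s hrs hr κ hκ hlarge using H
  have hlim := tendsto_integral_mul_conj_of_isJoining hT hds
    (tendsto_atTop_mono hr tendsto_id) hrs hκ hf hg hf0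
  obtain ⟨n, hn⟩ := (hlim.norm.eventually_lt_const (by simpa using hε)).exists
  exact (hlarge n).not_gt hn

/-- A totally ergodic automorphism of a standard Borel probability space with discrete
spectrum has the AOP property. -/
theorem aop_of_discreteSpectrum
    {X : Type*} [MeasurableSpace X] [StandardBorelSpace X]
    (μ : Measure X) [IsProbabilityMeasure μ] (T : X ≃ᵐ X)
    (hT : MeasurePreserving T μ μ)
    (hTerg : TotallyErgodic (⇑T) μ)
    (hds : DiscreteSpectrum (⇑T) μ) :
    AOP (⇑T) μ := by
  intro f g hf hg hf0 _ ε hε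
  obtain ⟨N, hN⟩ := aop_of_discreteSpectrum_general hTerg hds hf hg hf0 hε
  exact ⟨N, fun r s hr hs hrs hNr _ κ _ hfst hsnd hκ => hN r s ((Nat.coprime_primes hr hs).2 hrs)
    hNr κ ⟨⟨measurable_fst, hfst⟩, ⟨measurable_snd, hsnd⟩, hκ.toMeasurePreserving⟩⟩
end

section
/- Let T be an ergodic automorphism of a standard Borel probability space (X,μ), let k ≥ 1, and let f₀, f₁, …, f_k : X → ℂ be measurable functions with |f_j| = 1 μ-a.e. for every j, satisfying f_j∘T = f_{j-1}·f_j μ-a.e. for each 1 ≤ j ≤ k, where f₀ is the constant function with value c ∈ ℂ, |c| = 1 and cⁿ ≠ 1 for every integer n ≠ 0. Then ∫_X f_k dμ = 0. -/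
open MeasureTheory Filter

open scoped ComplexConjugate InnerProductSpace

/-!
A vector orthogonal to all its later translates under a linear isometry has an orthogonal orbit, so
by Bessel's inequality it is orthogonal to every fixed vector. For the Koopman operator on `L²` and
the constant function `1`, this says that a function with vanishing autocorrelations has integral
zero. The `n`-th autocorrelation of a quasi-eigenfunction `f` of level `k + 1` and eigenvalue `c` is
the integral of `(f ∘ Tⁿ) * conj f`, a quasi-eigenfunction of level `k` and eigenvalue `cⁿ`. As `cⁿ`
is again not a root of unity, induction on the level reduces the theorem to genuine eigenfunctions.
-/

section Isometry

variable {𝕜 E : Type*} [RCLike 𝕜] [NormedAddCommGroup E] [InnerProductSpace 𝕜 E]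
  (U : E →ₗᵢ[𝕜] E) {v w : E}

theorem pairwise_inner_isometry_pow_eq_zero (horth : ∀ n : ℕ, 0 < n → ⟪v, (U ^ n) v⟫_𝕜 = 0) :
    Pairwise fun m n : ℕ => ⟪(U ^ m) v, (U ^ n) v⟫_𝕜 = 0 := by
  have hlt {m n : ℕ} (hmn : m < n) : ⟪(U ^ m) v, (U ^ n) v⟫_𝕜 = 0 := by
    obtain ⟨d, rfl⟩ := Nat.exists_eq_add_of_le hmn.le
    rw [pow_add, LinearIsometry.coe_mul, Function.comp_apply, LinearIsometry.inner_map_map]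
    exact horth d (by omega)
  intro m n hmn
  rcases hmn.lt_or_gt with h | h
  · exact hlt h
  · exact inner_eq_zero_symm.mp (hlt h)

theorem inner_eq_zero_of_forall_inner_isometry_pow_eq_zero
    (horth : ∀ n : ℕ, 0 < n → ⟪v, (U ^ n) v⟫_𝕜 = 0) (hw : U w = w) : ⟪v, w⟫_𝕜 = 0 := by
  rcases eq_or_ne v 0 with rfl | hv
  · exact inner_zero_left w
  have hinner (n : ℕ) : ⟪(U ^ n) v, w⟫_𝕜 = ⟪v, w⟫_𝕜 := by
    have hfix : (U ^ n) w = w := by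
      rw [LinearIsometry.coe_pow, Function.iterate_fixed hw]
    calc
      ⟪(U ^ n) v, w⟫_𝕜 = ⟪(U ^ n) v, (U ^ n) w⟫_𝕜 := by rw [hfix]
      _ = ⟪v, w⟫_𝕜 := (U ^ n).inner_map_map v w
  have horthonormal : Orthonormal 𝕜 fun n : ℕ => ((‖v‖⁻¹ : ℝ) : 𝕜) • (U ^ n) v := by
    refine ⟨fun n => ?_, fun m n hmn => ?_⟩
    · rw [norm_smul, LinearIsometry.norm_map, RCLike.norm_ofReal, abs_inv, abs_norm,
        inv_mul_cancel₀ (norm_ne_zero_iff.mpr hv)]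
    · beta_reduce
      rw [inner_smul_left, inner_smul_right,
        pairwise_inner_isometry_pow_eq_zero U horth hmn, mul_zero, mul_zero]
  have hsummable := horthonormal.inner_products_summable w
  simp only [inner_smul_left, hinner, summable_const_iff] at hsummable
  simpa [hv] using hsummable

end Isometry

section Autocorrelation

variable {X 𝕜 : Type*} [RCLike 𝕜] {S T : X → X} {f g : X → 𝕜}

/-- The multiplicative derivative `(f ∘ S) * conj f` of `f` along `S`. Its integral is the
correlation of `f` with its translate by `S`; for `f` of modulus one it is the quotient
`(f ∘ S) / f`. -/
def mulDerivative (S : X → X) (f : X → 𝕜) (x : X) : 𝕜 :=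
  f (S x) * conj (f x)

theorem norm_mulDerivative (x : X) : ‖mulDerivative S f x‖ = ‖f (S x)‖ * ‖f x‖ := by
  rw [mulDerivative, norm_mul, RCLike.norm_conj]

variable [MeasurableSpace X] {μ : Measure X}

theorem aestronglyMeasurable_mulDerivative (hS : Measure.QuasiMeasurePreserving S μ μ)
    (hf : AEStronglyMeasurable f μ) : AEStronglyMeasurable (mulDerivative S f) μ :=
  (hf.comp_quasiMeasurePreserving hS).mul (RCLike.continuous_conj.comp_aestronglyMeasurable hf)

theorem mulDerivative_apply_ae_eq_mul (hS : Measure.QuasiMeasurePreserving S μ μ)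
    (hST : Function.Commute S T) (hf : ∀ᵐ x ∂μ, f (T x) = g x * f x) :
    ∀ᵐ x ∂μ, mulDerivative S f (T x) = mulDerivative S g x * mulDerivative S f x := by
  filter_upwards [hf, hS.ae hf] with x hx hSx
  simp only [mulDerivative]
  rw [hST x, hSx, hx, map_mul]
  ring

theorem ae_apply_iterate_eq_pow_mul (hT : Measure.QuasiMeasurePreserving T μ μ) {c : 𝕜}
    (hf : ∀ᵐ x ∂μ, f (T x) = c * f x) (n : ℕ) : ∀ᵐ x ∂μ, f (T^[n] x) = c ^ n * f x := by
  induction n with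
  | zero => simp
  | succ n ih =>
    filter_upwards [ih, (hT.iterate n).ae hf] with x hn hsucc
    rw [Function.iterate_succ_apply', hsucc, hn, pow_succ', mul_assoc]

theorem mulDerivative_iterate_ae_eq_pow (hT : Measure.QuasiMeasurePreserving T μ μ) {c : 𝕜}
    (hmod : ∀ᵐ x ∂μ, ‖f x‖ = 1) (hf : ∀ᵐ x ∂μ, f (T x) = c * f x) (n : ℕ) :
    ∀ᵐ x ∂μ, mulDerivative T^[n] f x = c ^ n := by
  filter_upwards [hmod, ae_apply_iterate_eq_pow_mul hT hf n] with x hnorm hx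
  rw [mulDerivative, hx, mul_assoc, RCLike.mul_conj, hnorm, RCLike.ofReal_one, one_pow, mul_one]

theorem integral_eq_zero_of_forall_integral_mulDerivative_iterate_eq_zero [IsFiniteMeasure μ]
    (hT : MeasurePreserving T μ μ) (hf : MemLp f 2 μ)
    (hcorr : ∀ n : ℕ, 0 < n → ∫ x, mulDerivative T^[n] f x ∂μ = 0) : ∫ x, f x ∂μ = 0 := by
  have hone : MemLp (fun _ : X => (1 : 𝕜)) 2 μ := memLp_const 1
  let U : Lp 𝕜 2 μ →ₗᵢ[𝕜] Lp 𝕜 2 μ := Lp.compMeasurePreservingₗᵢ 𝕜 T hT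
  have hU (n : ℕ) : (U ^ n) hf.toLp = (hf.comp_measurePreserving (hT.iterate n)).toLp := by
    rw [LinearIsometry.coe_pow, ← Lp.toLp_compMeasurePreserving hf (hT.iterate n),
      ← Lp.compMeasurePreserving_iterate hT n]
    rfl
  have horth (n : ℕ) (hn : 0 < n) : ⟪hf.toLp, (U ^ n) hf.toLp⟫_𝕜 = 0 := by
    rw [hU, L2.inner_def, ← hcorr n hn]
    apply integral_congr_ae
    filter_upwards [hf.coeFn_toLp, (hf.comp_measurePreserving (hT.iterate n)).coeFn_toLp]
      with x hx hTx
    rw [hx, hTx, RCLike.inner_apply, mulDerivative, Function.comp_apply]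
  have hfix : U hone.toLp = hone.toLp := Lp.toLp_compMeasurePreserving hone hT
  have hinner : ⟪hone.toLp, hf.toLp⟫_𝕜 = ∫ x, f x ∂μ := by
    rw [L2.inner_def]
    apply integral_congr_ae
    filter_upwards [hone.coeFn_toLp, hf.coeFn_toLp] with x hx_one hx
    rw [hx_one, hx, RCLike.inner_apply, map_one, mul_one]
  rw [← hinner]
  exact inner_eq_zero_symm.mp (inner_eq_zero_of_forall_inner_isometry_pow_eq_zero U horth hfix)

theorem integral_eq_zero_of_apply_ae_eq_const_mul (hT : MeasurePreserving T μ μ)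
    (hmeas : AEStronglyMeasurable f μ) {c : 𝕜} (hc : c ≠ 1)
    (hf : ∀ᵐ x ∂μ, f (T x) = c * f x) : ∫ x, f x ∂μ = 0 := by
  have hinv : ∫ x, f x ∂μ = c * ∫ x, f x ∂μ :=
    calc
      ∫ x, f x ∂μ = ∫ x, f (T x) ∂μ := by
        rw [← integral_map hT.aemeasurable (by rwa [hT.map_eq]), hT.map_eq]
      _ = c * ∫ x, f x ∂μ := by rw [integral_congr_ae hf, integral_const_mul]
  by_contra hne
  exact hc ((mul_eq_right₀ hne).mp hinv.symm)

end Autocorrelation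

section QuasiEigenfunction

variable {X : Type*} [MeasurableSpace X] {μ : Measure X} {T : X → X} {c : ℂ} {k : ℕ}

/-- `IsQuasiEigenfunction μ T c k f` says that `f` is a quasi-eigenfunction of `T` of level `k`
whose chain `f₀, …, f_k = f` starts at the constant `f₀ = c`. The functions `f₁, …, f_k` are
required to be a.e. strongly measurable and of modulus one, and all relations hold only
`μ`-almost everywhere. -/
inductive IsQuasiEigenfunction (μ : Measure X) (T : X → X) (c : ℂ) : ℕ → (X → ℂ) → Prop
  | const {f : X → ℂ} (hf : ∀ᵐ x ∂μ, f x = c) : IsQuasiEigenfunction μ T c 0 f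
  | succ {k : ℕ} {g f : X → ℂ} (hg : IsQuasiEigenfunction μ T c k g)
      (hmeas : AEStronglyMeasurable f μ) (hmod : ∀ᵐ x ∂μ, ‖f x‖ = 1)
      (hf : ∀ᵐ x ∂μ, f (T x) = g x * f x) : IsQuasiEigenfunction μ T c (k + 1) f

namespace IsQuasiEigenfunction

theorem of_chain {f : ℕ → X → ℂ} (hmeas : ∀ j < k, AEStronglyMeasurable (f (j + 1)) μ)
    (hmod : ∀ j < k, ∀ᵐ x ∂μ, ‖f (j + 1) x‖ = 1) (hf0 : ∀ᵐ x ∂μ, f 0 x = c)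
    (hchain : ∀ j < k, ∀ᵐ x ∂μ, f (j + 1) (T x) = f j x * f (j + 1) x) :
    IsQuasiEigenfunction μ T c k (f k) := by
  induction k with
  | zero => exact const hf0
  | succ k ih =>
    have hprev : IsQuasiEigenfunction μ T c k (f k) :=
      ih (fun j hj => hmeas j (by omega)) (fun j hj => hmod j (by omega))
        fun j hj => hchain j (by omega)
    exact hprev.succ (hmeas k k.lt_succ_self) (hmod k k.lt_succ_self) (hchain k k.lt_succ_self)

theorem apply_ae_eq_const_mul {f : X → ℂ} (hf : IsQuasiEigenfunction μ T c 1 f) :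
    ∀ᵐ x ∂μ, f (T x) = c * f x := by
  obtain _ | ⟨⟨hg⟩, -, -, hfg⟩ := hf
  filter_upwards [hg, hfg] with x hgx hx
  rw [hx, hgx]

theorem aestronglyMeasurable {f : X → ℂ} (hf : IsQuasiEigenfunction μ T c (k + 1) f) :
    AEStronglyMeasurable f μ := by
  obtain _ | ⟨-, hmeas, -, -⟩ := hf
  exact hmeas

theorem ae_norm_eq_one {f : X → ℂ} (hf : IsQuasiEigenfunction μ T c (k + 1) f) :
    ∀ᵐ x ∂μ, ‖f x‖ = 1 := by
  obtain _ | ⟨-, -, hmod, -⟩ := hf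
  exact hmod

theorem memLp [IsFiniteMeasure μ] {f : X → ℂ} (hf : IsQuasiEigenfunction μ T c (k + 1) f)
    (p : ENNReal) : MemLp f p μ :=
  MemLp.of_bound hf.aestronglyMeasurable 1 (hf.ae_norm_eq_one.mono fun _ hx => hx.le)

theorem mulDerivative_iterate (hT : Measure.QuasiMeasurePreserving T μ μ) {f : X → ℂ}
    (hf : IsQuasiEigenfunction μ T c (k + 1) f) (n : ℕ) :
    IsQuasiEigenfunction μ T (c ^ n) k (mulDerivative T^[n] f) := by
  induction k generalizing f with
  | zero =>
    exact const (mulDerivative_iterate_ae_eq_pow hT hf.ae_norm_eq_one hf.apply_ae_eq_const_mul n)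
  | succ k ih =>
    obtain _ | ⟨hg, hmeas, hmod, hfg⟩ := hf
    have hTn := hT.iterate n
    refine (ih hg).succ (aestronglyMeasurable_mulDerivative hTn hmeas) ?_
      (mulDerivative_apply_ae_eq_mul hTn (Function.Commute.iterate_self T n) hfg)
    filter_upwards [hmod, hTn.ae hmod] with x hx hTx
    rw [norm_mulDerivative, hx, hTx, one_mul]

end IsQuasiEigenfunction

theorem integral_eq_zero_of_irrational_quasiEigenfunction_general [IsFiniteMeasure μ]
    (hT : MeasurePreserving T μ μ) (hc : ∀ n : ℕ, 0 < n → c ^ n ≠ 1) {f : X → ℂ}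
    (hf : IsQuasiEigenfunction μ T c (k + 1) f) : ∫ x, f x ∂μ = 0 := by
  induction k generalizing c f with
  | zero =>
    have hc_ne : c ≠ 1 := by simpa only [pow_one] using hc 1 one_pos
    exact integral_eq_zero_of_apply_ae_eq_const_mul hT hf.aestronglyMeasurable hc_ne
      hf.apply_ae_eq_const_mul
  | succ k ih =>
    refine integral_eq_zero_of_forall_integral_mulDerivative_iterate_eq_zero hT (hf.memLp 2)
      fun n hn => ih (fun m hm => ?_) (hf.mulDerivative_iterate hT.quasiMeasurePreserving n)
    rw [← pow_mul]
    exact hc (n * m) (Nat.mul_pos hn hm)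

end QuasiEigenfunction

/-- **Lemma 3.2.** If `T` is an ergodic automorphism of a standard Borel probability space,
`k ≥ 1`, and `f₀, …, f_k` are measurable of modulus 1 a.e. with `f_j ∘ T = f_{j-1} · f_j`
a.e. for `1 ≤ j ≤ k`, where `f₀` is constant of irrational value `c` (|c| = 1, `cⁿ ≠ 1` for
all integers `n ≠ 0`), then `∫ f_k dμ = 0`. -/
theorem integral_eq_zero_of_irrational_quasiEigenfunction
    {X : Type*} [MeasurableSpace X] [StandardBorelSpace X]
    (μ : Measure X) [IsProbabilityMeasure μ] (T : X ≃ᵐ X)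
    (hTerg : Ergodic (⇑T) μ)
    (k : ℕ) (hk : 1 ≤ k)
    (f : ℕ → X → ℂ)
    (hmeas : ∀ j ≤ k, Measurable (f j))
    (hmod : ∀ j ≤ k, ∀ᵐ x ∂μ, ‖f j x‖ = 1)
    (c : ℂ) (hc : ‖c‖ = 1) (hcirr : ∀ n : ℤ, n ≠ 0 → c ^ n ≠ 1)
    (hf0 : ∀ x, f 0 x = c)
    (hchain : ∀ j, 1 ≤ j → j ≤ k → ∀ᵐ x ∂μ, f j (T x) = f (j - 1) x * f j x) :
    (∫ x, f k x ∂μ) = 0 := by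
  obtain ⟨k, rfl⟩ := Nat.exists_eq_add_of_le' hk
  exact integral_eq_zero_of_irrational_quasiEigenfunction_general hTerg.toMeasurePreserving
    (fun n hn => mod_cast hcirr n (by omega))
    (.of_chain (fun j hj => (hmeas (j + 1) hj).aestronglyMeasurable) (fun j hj => hmod (j + 1) hj)
      (ae_of_all μ hf0) fun j hj => hchain (j + 1) j.succ_pos hj)
end

section
/- Let T be an ergodic automorphism of a standard Borel probability space (X,μ), let k ≥ 1, and let f₀, f₁, …, f_k : X → ℂ be measurable with |f_j| = 1 μ-a.e. for every j, satisfying f_j∘T = f_{j-1}·f_j μ-a.e. for each 1 ≤ j ≤ k, where f₀ is the constant function with value c ∈ ℂ, |c| = 1. Let r ≥ 1 be an integer, and define g₀ := f_k and, for 1 ≤ j ≤ k, g_j := (g_{j-1}∘T^r)·conj(g_{j-1}). Then g_k equals the constant c^{r^k} μ-a.e. -/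
open MeasureTheory Filter

/-!
Put `F_j = ∏_{i < r} f_j ∘ T^i`. Telescoping `f_{j+1} ∘ T = f_j · f_{j+1}` along the orbit gives
`W_{T^r} f_{j+1} = F_j`, and multiplying the translated relations gives
`F_{j+1} ∘ T = F_j · F_{j+1}`. So one application of `W_{T^r}` to the top of the chain
`(f_j)_{j ≤ k}` over `c` produces the top of the chain `(F_j)_{j < k}` over `c ^ r`, and the claim
follows by induction on `k`, since `(c ^ r) ^ (r ^ (k - 1)) = c ^ (r ^ k)`.
-/

section BirkhoffProd

variable {X M : Type*} [CommMonoid M]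

/-- The multiplicative Birkhoff product `f · (f ∘ T) ⋯ (f ∘ T^(n-1))`, the analogue of
`birkhoffSum` for a commutative monoid written multiplicatively. -/
def birkhoffProd (T : X → X) (f : X → M) (n : ℕ) : X → M :=
  ∏ i ∈ Finset.range n, f ∘ T^[i]

theorem birkhoffProd_apply (T : X → X) (f : X → M) (n : ℕ) (x : X) :
    birkhoffProd T f n x = ∏ i ∈ Finset.range n, f (T^[i] x) :=
  Finset.prod_apply x _ _

theorem birkhoffProd_zero (T : X → X) (f : X → M) : birkhoffProd T f 0 = 1 :=
  Finset.prod_range_zero _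

theorem birkhoffProd_succ (T : X → X) (f : X → M) (n : ℕ) :
    birkhoffProd T f (n + 1) = birkhoffProd T f n * f ∘ T^[n] :=
  Finset.prod_range_succ _ n

theorem birkhoffProd_const (T : X → X) (c : M) (n : ℕ) :
    birkhoffProd T (fun _ => c) n = fun _ => c ^ n := by
  ext x
  simp [birkhoffProd_apply]

theorem birkhoffProd_mul (T : X → X) (f h : X → M) (n : ℕ) :
    birkhoffProd T (f * h) n = birkhoffProd T f n * birkhoffProd T h n :=
  Finset.prod_mul_distrib

theorem birkhoffProd_comp_self (T : X → X) (f : X → M) (n : ℕ) :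
    birkhoffProd T f n ∘ T = birkhoffProd T (f ∘ T) n := by
  ext x
  simp only [Function.comp_apply, birkhoffProd_apply, ← Function.iterate_succ_apply,
    ← Function.iterate_succ_apply']

variable {l : Filter X} {T : X → X} {f h : X → M}

theorem birkhoffProd_congr_eventuallyEq (hT : Tendsto T l l) (hfh : f =ᶠ[l] h) (n : ℕ) :
    birkhoffProd T f n =ᶠ[l] birkhoffProd T h n :=
  eventuallyEq_prod fun i _ => hfh.comp_tendsto (hT.iterate i)

theorem birkhoffProd_comp_self_eventuallyEq_mul (hT : Tendsto T l l)
    (hh : h ∘ T =ᶠ[l] f * h) (n : ℕ) :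
    birkhoffProd T h n ∘ T =ᶠ[l] birkhoffProd T f n * birkhoffProd T h n := by
  rw [birkhoffProd_comp_self, ← birkhoffProd_mul]
  exact birkhoffProd_congr_eventuallyEq hT hh n

theorem eventually_birkhoffProd_mem {S : Submonoid M} (hT : Tendsto T l l)
    (hf : ∀ᶠ x in l, f x ∈ S) (n : ℕ) : ∀ᶠ x in l, birkhoffProd T f n x ∈ S := by
  have hf_orbit : ∀ᶠ x in l, ∀ i ∈ Finset.range n, f (T^[i] x) ∈ S :=
    (eventually_all_finset _).2 fun i _ => (hT.iterate i).eventually hf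
  filter_upwards [hf_orbit] with x hx
  rw [birkhoffProd_apply]
  exact prod_mem hx

theorem comp_iterate_eventuallyEq_birkhoffProd_mul (hT : Tendsto T l l)
    (hh : h ∘ T =ᶠ[l] f * h) (n : ℕ) : h ∘ T^[n] =ᶠ[l] birkhoffProd T f n * h := by
  induction n with
  | zero => simp [birkhoffProd_zero]
  | succ n ih =>
    calc h ∘ T^[n + 1]
      _ = (h ∘ T) ∘ T^[n] := by rw [Function.iterate_succ', Function.comp_assoc]
      _ =ᶠ[l] f ∘ T^[n] * h ∘ T^[n] := hh.comp_tendsto (hT.iterate n)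
      _ =ᶠ[l] f ∘ T^[n] * (birkhoffProd T f n * h) := EventuallyEq.rfl.mul ih
      _ = birkhoffProd T f (n + 1) * h := by rw [birkhoffProd_succ, ← mul_assoc, mul_comm (f ∘ _)]

end BirkhoffProd

section MulDeriv

variable {X M : Type*} {l : Filter X} {T : X → X} {f h : X → M}

/-- The multiplicative derivative `W_T f = (f ∘ T) · conj f` of `f` along `T`; it equals
`(f ∘ T) / f` where `f` has unitary values. -/
def mulDeriv [Mul M] [Star M] (T : X → X) (f : X → M) : X → M :=
  f ∘ T * star f

theorem mulDeriv_congr_eventuallyEq [Mul M] [Star M] (hT : Tendsto T l l) (hfh : f =ᶠ[l] h) :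
    mulDeriv T f =ᶠ[l] mulDeriv T h :=
  (hfh.comp_tendsto hT).mul hfh.star

theorem mulDeriv_eventuallyEq_of_comp_eventuallyEq_mul [Monoid M] [StarMul M]
    (h_unitary : ∀ᶠ x in l, h x ∈ unitary M) (hh : h ∘ T =ᶠ[l] f * h) :
    mulDeriv T h =ᶠ[l] f := by
  filter_upwards [h_unitary, hh] with x hx hhx
  calc h (T x) * star (h x)
    _ = f x * h x * star (h x) := congrArg (· * star (h x)) hhx
    _ = f x := by rw [mul_assoc, Unitary.mul_star_self_of_mem hx, mul_one]

end MulDeriv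

section QuasiEigenfunction

variable {X M : Type*} {l : Filter X} {T : X → X} {f : ℕ → X → M} {c : M} {k : ℕ}

/-- `f k` is a quasi-eigenfunction of level `k` of `T` with `W_T^k (f k) = c`, and `f j` is its
image under `W_T^(k - j)`. The relation `W_T (f (j + 1)) = f j` is written without conjugation.
All conditions hold eventually along `l`, which is `ae μ` in the measure-theoretic setting. Terms
of the sequence beyond `f k` are unconstrained. -/
structure IsQuasiEigenchain [Monoid M] [StarMul M] (l : Filter X) (T : X → X) (f : ℕ → X → M)
    (c : M) (k : ℕ) : Prop where
  mem_unitary : ∀ j ≤ k, ∀ᶠ x in l, f j x ∈ unitary M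
  zero : f 0 =ᶠ[l] fun _ => c
  comp : ∀ j < k, f (j + 1) ∘ T =ᶠ[l] f j * f (j + 1)

theorem IsQuasiEigenchain.of_le [Monoid M] [StarMul M] {m : ℕ}
    (hf : IsQuasiEigenchain l T f c k) (hmk : m ≤ k) : IsQuasiEigenchain l T f c m where
  mem_unitary j hj := hf.mem_unitary j (hj.trans hmk)
  zero := hf.zero
  comp j hj := hf.comp j (hj.trans_le hmk)

variable [CommMonoid M] [StarMul M]

protected theorem IsQuasiEigenchain.birkhoffProd (hf : IsQuasiEigenchain l T f c k)
    (hT : Tendsto T l l) (r : ℕ) :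
    IsQuasiEigenchain l T (fun j => birkhoffProd T (f j) r) (c ^ r) k where
  mem_unitary j hj := eventually_birkhoffProd_mem hT (hf.mem_unitary j hj) r
  zero := by
    rw [← birkhoffProd_const T]
    exact birkhoffProd_congr_eventuallyEq hT hf.zero r
  comp j hj := birkhoffProd_comp_self_eventuallyEq_mul hT (hf.comp j hj) r

theorem IsQuasiEigenchain.mulDeriv_iterate_eventuallyEq (hf : IsQuasiEigenchain l T f c k)
    (hT : Tendsto T l l) (r : ℕ) {j : ℕ} (hj : j < k) :
    mulDeriv T^[r] (f (j + 1)) =ᶠ[l] birkhoffProd T (f j) r :=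
  mulDeriv_eventuallyEq_of_comp_eventuallyEq_mul (hf.mem_unitary (j + 1) hj)
    (comp_iterate_eventuallyEq_birkhoffProd_mul hT (hf.comp j hj) r)

theorem quasiEigenfunction_power_iterate_general (hT : Tendsto T l l)
    (hf : IsQuasiEigenchain l T f c k) (r : ℕ) {g : ℕ → X → M} (hg0 : g 0 =ᶠ[l] f k)
    (hg : ∀ j < k, g (j + 1) =ᶠ[l] mulDeriv T^[r] (g j)) :
    g k =ᶠ[l] fun _ => c ^ r ^ k := by
  induction k generalizing f c g with
  | zero => simpa using hg0.trans hf.zero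
  | succ k ih =>
    have hg1 : g 1 =ᶠ[l] birkhoffProd T (f k) r :=
      calc g 1
        _ =ᶠ[l] mulDeriv T^[r] (g 0) := hg 0 k.succ_pos
        _ =ᶠ[l] mulDeriv T^[r] (f (k + 1)) := mulDeriv_congr_eventuallyEq (hT.iterate r) hg0
        _ =ᶠ[l] birkhoffProd T (f k) r := hf.mulDeriv_iterate_eventuallyEq hT r k.lt_succ_self
    have hgk : g (k + 1) =ᶠ[l] fun _ => (c ^ r) ^ r ^ k :=
      ih ((hf.of_le k.le_succ).birkhoffProd hT r) (g := fun j => g (j + 1)) hg1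
        fun j hj => hg (j + 1) (Nat.succ_lt_succ hj)
    simpa only [pow_succ', pow_mul] using hgk

end QuasiEigenfunction

theorem mem_unitary_iff_norm_eq_one {𝕜 : Type*} [RCLike 𝕜] {z : 𝕜} :
    z ∈ unitary 𝕜 ↔ ‖z‖ = 1 := by
  rw [Unitary.mem_iff_star_mul_self, RCLike.star_def, RCLike.conj_mul]
  norm_cast
  exact pow_eq_one_iff_of_nonneg (norm_nonneg z) two_ne_zero

/-- **Lemma 3.3.** Let `T` be an ergodic automorphism of a standard Borel probability space,
`k ≥ 1`, and let `f₀, …, f_k` be measurable of modulus 1 a.e. with `f_j ∘ T = f_{j-1} · f_j`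
a.e. for `1 ≤ j ≤ k`, where `f₀` is the constant `c`, `|c| = 1` (so `f_k ∈ E_k(T)` with
`W_T^k f_k = c`). Let `r ≥ 1` and define `g₀ := f_k`,
`g_j := (g_{j-1} ∘ T^r) · conj(g_{j-1})`. Then `g_k = c^(r^k)` a.e., i.e.
`W_{T^r}^k f_k = (W_T^k f_k)^(r^k)`. -/
theorem quasiEigenfunction_power_iterate
    {X : Type*} [MeasurableSpace X] [StandardBorelSpace X]
    (μ : Measure X) [IsProbabilityMeasure μ] (T : X ≃ᵐ X)
    (hTerg : Ergodic (⇑T) μ)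
    (k : ℕ) (hk : 1 ≤ k)
    (f : ℕ → X → ℂ)
    (hmeas : ∀ j ≤ k, Measurable (f j))
    (hmod : ∀ j ≤ k, ∀ᵐ x ∂μ, ‖f j x‖ = 1)
    (c : ℂ) (hc : ‖c‖ = 1)
    (hf0 : ∀ x, f 0 x = c)
    (hchain : ∀ j, 1 ≤ j → j ≤ k → ∀ᵐ x ∂μ, f j (T x) = f (j - 1) x * f j x)
    (r : ℕ) (hr : 1 ≤ r)
    (g : ℕ → X → ℂ)
    (hg0 : g 0 = f k)
    (hgrec : ∀ j, 1 ≤ j → j ≤ k →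
      ∀ x, g j x = g (j - 1) ((⇑T)^[r] x) * (starRingEnd ℂ) (g (j - 1) x)) :
    ∀ᵐ x ∂μ, g k x = c ^ (r ^ k) :=
  quasiEigenfunction_power_iterate_general
    hTerg.toMeasurePreserving.quasiMeasurePreserving.tendsto_ae
    { mem_unitary := fun j hj => (hmod j hj).mono fun _ => mem_unitary_iff_norm_eq_one.2
      zero := .of_forall hf0
      comp := fun j hj => hchain (j + 1) j.succ_pos hj }
    r (.of_eq hg0) fun j hj => .of_forall (hgrec (j + 1) j.succ_pos hj)
end
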